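/- arXiv:math/0503141 — 3 statements merged into one kernel-verified Lean document; each statement's English description precedes it below -/
import Mathlib

section
/- Let f: ℝⁿ × Γ → ℝⁿ be continuous, Γ finite. Suppose x_k: ℝ₊ → ℝⁿ satisfy x_k(t) = x_k(0) + ∫₀ᵗ f(x_k(s), σ_k(s)) ds with |x_k(t)| ≤ M for all t, k, that x_k → x* uniformly on compact subsets of ℝ₊, and σ_k(t) → σ*(t) for almost all t ≥ 0, where σ* is a switching signal. Then x*(t) = x*(0) + ∫₀ᵗ f(x*(s), σ*(s)) ds for all t ≥ 0, i.e., x* is a solution of the switched system corresponding to σ*. -/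
open Filter Set MeasureTheory

/-- The switching times (points of left-discontinuity) of a signal `σ` on `(0,∞)`. -/
def SwitchTimes {Γ : Type*} (σ : ℝ → Γ) : Set ℝ :=
  {s | 0 < s ∧ ∀ ε > 0, ∃ u, s - ε < u ∧ u < s ∧ σ u ≠ σ s}

/-- A piecewise constant, right-continuous switching signal: locally constant from the
right at every time, with finitely many switching times in every bounded interval. -/
def PiecewiseConstantSignal {Γ : Type*} (σ : ℝ → Γ) : Prop :=
  (∀ s : ℝ, ∃ ε > 0, ∀ u : ℝ, s ≤ u → u < s + ε → σ u = σ s) ∧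
  ∀ T : ℝ, (SwitchTimes σ ∩ Set.Ioo 0 T).Finite

lemma sig_meas {m : ℕ} {σ : ℝ → Fin m} (h : PiecewiseConstantSignal σ) (t : ℝ) :
    AEMeasurable σ (volume.restrict (Set.Ioc 0 t)) := by
  have hc : (SwitchTimes σ).Countable := by
    have : SwitchTimes σ ⊆ ⋃ N : ℕ, (SwitchTimes σ ∩ Set.Ioo 0 (N : ℝ)) := by
      intro s hs
      obtain ⟨N, hN⟩ := exists_nat_gt s
      exact Set.mem_iUnion.2 ⟨N, hs, hs.1, hN⟩
    exact (Set.countable_iUnion fun N : ℕ => (h.2 N).countable).mono this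
  have key : ∀ γ : Fin m, MeasurableSet (σ ⁻¹' {γ} ∩ Set.Ioi 0) := by
    intro γ
    have e : σ ⁻¹' {γ} ∩ Set.Ioi 0 = (interior (σ ⁻¹' {γ}) ∩ Set.Ioi 0) ∪
        ((σ ⁻¹' {γ} ∩ Set.Ioi 0) ∩ SwitchTimes σ) := by
      ext s
      constructor
      · rintro ⟨hs, h0⟩
        by_cases hsw : s ∈ SwitchTimes σ
        · exact Or.inr ⟨⟨hs, h0⟩, hsw⟩
        · left
          refine ⟨?_, h0⟩
          have h0' : 0 < s := h0
          have h2 : ∃ ε > 0, ∀ u, s - ε < u → u < s → σ u = σ s := by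
            by_contra hcon
            push Not at hcon
            exact hsw ⟨h0', hcon⟩
          obtain ⟨ε, he, h2⟩ := h2
          obtain ⟨δ, hd, h3⟩ := h.1 s
          rw [mem_interior_iff_mem_nhds]
          filter_upwards [Ioo_mem_nhds (show s - ε < s by linarith) (show s < s + δ by linarith)]
            with u hu
          have hs' : σ s = γ := hs
          change σ u = γ
          rcases lt_or_ge u s with h4 | h4
          · rw [h2 u hu.1 h4, hs']
          · rw [h3 u h4 hu.2, hs']
      · rintro (⟨h1, h2⟩ | h1)
        · exact ⟨interior_subset h1, h2⟩
        · exact h1.1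
    rw [e]
    exact (isOpen_interior.measurableSet.inter measurableSet_Ioi).union
      (hc.mono Set.inter_subset_right).measurableSet
  by_cases ht : 0 < t
  · have g0 : Fin m := σ 0
    classical
    refine ⟨fun s => if 0 < s then σ s else g0, ?_, ?_⟩
    · refine measurable_to_countable' fun γ => ?_
      have : (fun s => if 0 < s then σ s else g0) ⁻¹' {γ} =
          (σ ⁻¹' {γ} ∩ Set.Ioi 0) ∪ (Set.Iic 0 ∩ {_s | g0 = γ}) := by
        ext s
        by_cases hs : 0 < s
        · simp [hs]
        · simp [hs, not_lt.1 hs]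
      rw [this]
      exact (key γ).union (measurableSet_Iic.inter (MeasurableSet.const _))
    · filter_upwards [ae_restrict_mem measurableSet_Ioc] with s hs
      simp [hs.1]
  · rw [Set.Ioc_eq_empty ht]; simp

/-- passage to the limit in the integral equation. If trajectories `x k`
of `ẋ = f(x, σ k)` are uniformly bounded, converge uniformly on compact subsets of
`ℝ₊` to `x'`, and `σ k (t) → σ' (t)` for almost all `t ≥ 0` (eventual equality, `Γ`
being discrete), with `σ'` a switching signal, then `x'` satisfies the integral
equation for `σ'`, i.e. is a solution of the switched system corresponding to `σ'`. -/
theorem stmt6 {n m : ℕ}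
    (f : EuclideanSpace ℝ (Fin n) → Fin m → EuclideanSpace ℝ (Fin n))
    (hf : ∀ γ : Fin m, Continuous (fun ξ => f ξ γ))
    (x : ℕ → ℝ → EuclideanSpace ℝ (Fin n)) (σ : ℕ → ℝ → Fin m)
    (hsig : ∀ k, PiecewiseConstantSignal (σ k))
    (hcont : ∀ k, ContinuousOn (x k) (Set.Ici 0))
    (heq : ∀ k, ∀ t : ℝ, 0 ≤ t →
      x k t = x k 0 + ∫ s in (0:ℝ)..t, f (x k s) (σ k s))
    (M : ℝ) (hM : ∀ k, ∀ t : ℝ, 0 ≤ t → ‖x k t‖ ≤ M)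
    (x' : ℝ → EuclideanSpace ℝ (Fin n)) (σ' : ℝ → Fin m)
    (hsig' : PiecewiseConstantSignal σ')
    (hconv : ∀ K : Set ℝ, K ⊆ Set.Ici 0 → IsCompact K →
      TendstoUniformlyOn x x' atTop K)
    (haes : ∀ᵐ t ∂(volume.restrict (Set.Ici (0:ℝ))), ∀ᶠ k in atTop, σ k t = σ' t) :
    ∀ t : ℝ, 0 ≤ t → x' t = x' 0 + ∫ s in (0:ℝ)..t, f (x' s) (σ' s) := by
  intro t ht
  have hpt : ∀ s : ℝ, 0 ≤ s → Tendsto (fun k => x k s) atTop (nhds (x' s)) := fun s hs =>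
    (hconv {s} (by simpa using hs) isCompact_singleton).tendsto_at (Set.mem_singleton s)
  have hb : ∀ γ : Fin m, ∃ C : ℝ, ∀ ξ ∈ Metric.closedBall (0 : EuclideanSpace ℝ (Fin n)) M,
      ‖f ξ γ‖ ≤ C := fun γ =>
    (isCompact_closedBall _ _).exists_bound_of_continuousOn (hf γ).continuousOn
  choose C hC using hb
  have hfm : Measurable (fun p : EuclideanSpace ℝ (Fin n) × Fin m => f p.1 p.2) :=
    measurable_from_prod_countable_left fun γ => (hf γ).measurable
  have hint : Tendsto (fun k => ∫ s in (0:ℝ)..t, f (x k s) (σ k s)) atTop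
      (nhds (∫ s in (0:ℝ)..t, f (x' s) (σ' s))) := by
    refine intervalIntegral.tendsto_integral_filter_of_dominated_convergence
      (fun _ => ∑ γ, |C γ|) ?_ ?_ ?_ ?_
    · refine Eventually.of_forall fun k => ?_
      rw [Set.uIoc_of_le ht]
      have hx : AEMeasurable (x k) (volume.restrict (Set.Ioc 0 t)) :=
        ((hcont k).mono fun s hs => hs.1.le).aemeasurable measurableSet_Ioc
      exact (hfm.comp_aemeasurable (hx.prodMk (sig_meas (hsig k) t))).aestronglyMeasurable
    · refine Eventually.of_forall fun k => Eventually.of_forall fun s hs => ?_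
      rw [Set.uIoc_of_le ht] at hs
      refine (hC (σ k s) _ (by simpa using hM k s hs.1.le)).trans ((le_abs_self _).trans ?_)
      exact Finset.single_le_sum (f := fun γ => |C γ|) (fun _ _ => abs_nonneg _)
        (Finset.mem_univ _)
    · exact intervalIntegrable_const
    · rw [ae_restrict_iff' measurableSet_Ici] at haes
      filter_upwards [haes] with s h1 hs
      rw [Set.uIoc_of_le ht] at hs
      refine (((hf (σ' s)).tendsto _).comp (hpt s hs.1.le)).congr' ?_
      filter_upwards [h1 hs.1.le] with k hk
      simp [hk]
  refine tendsto_nhds_unique (hpt t ht) ?_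
  exact ((hpt 0 le_rfl).add hint).congr fun k => (heq k t ht).symm
end

section
/- Compactness of constrained average dwell-time trajectories (SC property): let χ be a closed covering of ℝⁿ, f: ℝⁿ × Γ → ℝⁿ continuous, Γ finite, τ_D > 0, N₀ ∈ ℕ. Every uniformly bounded sequence {(x_k, σ_k)} of trajectories of ẋ = f(x,σ) with σ_k of average dwell-time τ_D and chatter bound N₀ and x_k(t) ∈ χ_{σ_k(t)} for all t ≥ 0 admits a subsequence {(x_{k_l}, σ_{k_l})} and a trajectory (x*, σ*) of the same class (σ* has average dwell-time τ_D and chatter bound N₀, and x*(t) ∈ χ_{σ*(t)} for all t) such that x_{k_l} → x* uniformly on compact subsets of ℝ₊ and σ_{k_l}(t) → σ*(t) for almost every t ≥ 0. -/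
open Filter Set MeasureTheory

/-- `σ` is locally constant from the right at every time (right-continuity and
piecewise constancy from the right). -/
def RightLocConst {Γ : Type*} (σ : ℝ → Γ) : Prop :=
  ∀ s : ℝ, ∃ ε > 0, ∀ u : ℝ, s ≤ u → u < s + ε → σ u = σ s

/-- `σ` has average dwell-time `τD` and chatter bound `N₀`: the number of switching
times in any open interval `(τ₁,τ₂) ⊆ ℝ₊` is at most `N₀ + (τ₂ - τ₁)/τD`. -/
def HasADT {Γ : Type*} (σ : ℝ → Γ) (τD : ℝ) (N₀ : ℕ) : Prop :=
  ∀ τ₁ τ₂ : ℝ, 0 ≤ τ₁ → τ₁ < τ₂ →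
    (Nat.card ↥(SwitchTimes σ ∩ Set.Ioo τ₁ τ₂) : ℝ) ≤ (N₀ : ℝ) + (τ₂ - τ₁) / τD

/-- A switching signal with average dwell-time `τD > 0` and chatter bound `N₀`:
piecewise constant, right-continuous, with the average dwell-time property. -/
def IsSwitchingSignal {Γ : Type*} (σ : ℝ → Γ) (τD : ℝ) (N₀ : ℕ) : Prop :=
  RightLocConst σ ∧ HasADT σ τD N₀

/-- A trajectory of the switched system `ẋ = f(x,σ)`: a continuous curve satisfying the
integral equation on `[0,∞)`. -/
def IsTrajectory {n m : ℕ}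
    (f : EuclideanSpace ℝ (Fin n) → Fin m → EuclideanSpace ℝ (Fin n))
    (x : ℝ → EuclideanSpace ℝ (Fin n)) (σ : ℝ → Fin m) : Prop :=
  ContinuousOn x (Set.Ici 0) ∧
  ∀ t : ℝ, 0 ≤ t → x t = x 0 + ∫ s in (0:ℝ)..t, f (x s) (σ s)

theorem aux_right_gap {Γ : Type*} {σ : ℝ → Γ} (h : RightLocConst σ) (s : ℝ) :
    ∃ ε > 0, ∀ u, s < u → u < s + ε → u ∉ SwitchTimes σ := by
  obtain ⟨ε, hε, H⟩ := h s
  refine ⟨ε, hε, fun u h1 h2 hu => ?_⟩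
  obtain ⟨v, hv1, hv2, hv3⟩ := hu.2 (u - s) (by linarith)
  exact hv3 ((H v (by linarith) (by linarith)).trans (H u h1.le h2).symm)

theorem aux_fin {Γ : Type*} {σ : ℝ → Γ} {τD : ℝ} (hτ : 0 < τD) {N₀ : ℕ}
    (h : IsSwitchingSignal σ τD N₀) {a : ℝ} (ha : 0 ≤ a) (b : ℝ) :
    (SwitchTimes σ ∩ Ioo a b).Finite := by
  by_contra hb
  set A : Set ℝ := {t | ¬ (SwitchTimes σ ∩ Ioo a t).Finite} with hA
  have hbA : b ∈ A := hb
  have hbdd : BddBelow A := by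
    refine ⟨a, fun t ht => ?_⟩
    by_contra hlt
    push Not at hlt
    apply ht
    rw [Ioo_eq_empty (by linarith)]
    simp
  have hlt : ∀ t, t < sInf A → (SwitchTimes σ ∩ Ioo a t).Finite := by
    intro t ht
    by_contra h'
    exact absurd (csInf_le hbdd (show t ∈ A from h')) (not_le.mpr ht)
  set s := sInf A with hs
  have hsfin : (SwitchTimes σ ∩ Ioo a s).Finite := by
    by_contra hinf
    obtain ⟨N, hN⟩ := exists_nat_gt ((N₀ : ℝ) + (s - a) / τD)
    obtain ⟨F, hF, hFc⟩ := Set.Infinite.exists_subset_card_eq hinf (N + 1)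
    have hne : F.Nonempty := by
      rw [← Finset.card_pos]; omega
    have hmax := hF (F.max'_mem hne)
    set p := F.max' hne
    have hp1 : a < p := hmax.2.1
    have hp2 : p < s := hmax.2.2
    have hfin := hlt ((p + s) / 2) (by linarith)
    have hsub : (F : Set ℝ) ⊆ SwitchTimes σ ∩ Ioo a ((p + s) / 2) := by
      intro y hy
      refine ⟨(hF hy).1, (hF hy).2.1, ?_⟩
      have := F.le_max' y hy
      change y ≤ p at this
      linarith
    have hc := Set.ncard_le_ncard hsub hfin
    rw [Set.ncard_coe_finset, hFc] at hc
    have hadt := h.2 a ((p + s) / 2) ha (by linarith)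
    rw [Nat.card_coe_set_eq] at hadt
    have h1 : ((p + s) / 2 - a) / τD ≤ (s - a) / τD := by
      gcongr; linarith
    have h2 : ((N + 1 : ℕ) : ℝ) ≤ _ := Nat.cast_le.mpr hc
    push_cast at h2
    linarith
  obtain ⟨ε, hε, H⟩ := aux_right_gap h.1 s
  obtain ⟨t, htA, hts⟩ := exists_lt_of_csInf_lt ⟨b, hbA⟩ (show sInf A < s + ε by linarith)
  apply htA
  refine (hsfin.union (Set.finite_singleton s)).subset ?_
  rintro u ⟨hu1, hu2, hu3⟩
  rcases lt_trichotomy u s with hus | hus | hus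
  · exact Or.inl ⟨hu1, hu2, hus⟩
  · exact Or.inr hus
  · exact absurd hu1 (H u hus (by linarith))

theorem aux_const {Γ : Type*} {σ : ℝ → Γ} (h : RightLocConst σ) {a b : ℝ} (ha : 0 ≤ a)
    (hS : SwitchTimes σ ∩ Ioc a b = ∅) : ∀ t ∈ Icc a b, σ t = σ a := by
  by_contra hcon
  push Not at hcon
  obtain ⟨t₀, ht₀, hne⟩ := hcon
  set A : Set ℝ := {t | t ∈ Icc a b ∧ σ t ≠ σ a} with hA
  have hbdd : BddBelow A := ⟨a, fun t ht => ht.1.1⟩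
  have hAne : A.Nonempty := ⟨t₀, ht₀, hne⟩
  have has : a ≤ sInf A := le_csInf hAne (fun t ht => ht.1.1)
  have hsb : sInf A ≤ b := (csInf_le hbdd (show t₀ ∈ A from ⟨ht₀, hne⟩)).trans ht₀.2
  set s := sInf A with hs
  have hlt : ∀ u, a ≤ u → u < s → σ u = σ a := by
    intro u h1 h2
    by_contra h3
    exact absurd (csInf_le hbdd (show u ∈ A from ⟨⟨h1, by linarith⟩, h3⟩)) (not_le.mpr h2)
  have hsa : σ s = σ a := by
    rcases has.eq_or_lt with h1 | h1
    · rw [← h1]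
    · have hns : s ∉ SwitchTimes σ := fun h2 => by
        have : s ∈ SwitchTimes σ ∩ Ioc a b := ⟨h2, h1, hsb⟩
        rw [hS] at this
        exact this
      have : ∃ ε > 0, ∀ u, s - ε < u → u < s → σ u = σ s := by
        by_contra hc
        push Not at hc
        exact hns ⟨by linarith, hc⟩
      obtain ⟨ε, hε, H⟩ := this
      obtain ⟨u, hu1, hu2⟩ := exists_between (show max a (s - ε) < s from max_lt h1 (by linarith))
      rw [← H u (lt_of_le_of_lt (le_max_right _ _) hu1) hu2]
      exact hlt u ((le_max_left _ _).trans hu1.le) hu2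
  obtain ⟨ε, hε, H⟩ := h s
  obtain ⟨t, htA, hts⟩ := exists_lt_of_csInf_lt hAne (show sInf A < s + ε by linarith)
  exact htA.2 ((H t (csInf_le hbdd htA) hts).trans hsa)

/-- number of switches in `(0,t]` -/
noncomputable def cntSw {Γ : Type*} (σ : ℝ → Γ) (t : ℝ) : ℕ := (SwitchTimes σ ∩ Ioc 0 t).ncard

theorem aux_finIoc {Γ : Type*} {σ : ℝ → Γ} {τD : ℝ} (hτ : 0 < τD) {N₀ : ℕ}
    (h : IsSwitchingSignal σ τD N₀) (b : ℝ) :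
    (SwitchTimes σ ∩ Ioc 0 b).Finite :=
  (aux_fin hτ h le_rfl (b + 1)).subset
    (inter_subset_inter_right _ (fun _ hu => ⟨hu.1, by linarith [hu.2]⟩))

theorem cntSw_mono {Γ : Type*} {σ : ℝ → Γ} {τD : ℝ} (hτ : 0 < τD) {N₀ : ℕ}
    (h : IsSwitchingSignal σ τD N₀) : Monotone (cntSw σ) := fun _ b hab =>
  Set.ncard_le_ncard (inter_subset_inter_right _ (Ioc_subset_Ioc_right hab)) (aux_finIoc hτ h b)

theorem cntSw_le {Γ : Type*} {σ : ℝ → Γ} {τD : ℝ} (hτ : 0 < τD) {N₀ : ℕ}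
    (h : IsSwitchingSignal σ τD N₀) (t : ℝ) :
    cntSw σ t ≤ ⌊(N₀ : ℝ) + (|t| + 1) / τD⌋₊ := by
  apply Nat.le_floor
  have h1 := h.2 0 (|t| + 1) le_rfl (by positivity)
  rw [Nat.card_coe_set_eq] at h1
  have h2 : cntSw σ t ≤ (SwitchTimes σ ∩ Ioo 0 (|t| + 1)).ncard :=
    Set.ncard_le_ncard (inter_subset_inter_right _
      (fun _ hu => ⟨hu.1, by linarith [hu.2, le_abs_self t]⟩)) (aux_fin hτ h le_rfl _)
  have h3 : (cntSw σ t : ℝ) ≤ _ := Nat.cast_le.mpr h2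
  rw [sub_zero] at h1
  linarith

theorem cntSw_const {Γ : Type*} {σ : ℝ → Γ} {τD : ℝ} (hτ : 0 < τD) {N₀ : ℕ}
    (h : IsSwitchingSignal σ τD N₀) {a b : ℝ} (ha : 0 ≤ a) (hab : a ≤ b)
    (he : cntSw σ a = cntSw σ b) : ∀ t ∈ Icc a b, σ t = σ a := by
  apply aux_const h.1 ha
  have h1 : SwitchTimes σ ∩ Ioc 0 a = SwitchTimes σ ∩ Ioc 0 b :=
    Set.eq_of_subset_of_ncard_le (inter_subset_inter_right _ (Ioc_subset_Ioc_right hab)) he.ge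
      (aux_finIoc hτ h b)
  ext u
  simp only [mem_inter_iff, mem_Ioc, mem_empty_iff_false, iff_false, not_and]
  intro hu h2 h3
  have : u ∈ SwitchTimes σ ∩ Ioc 0 a := by rw [h1]; exact ⟨hu, by linarith, h3⟩
  exact absurd this.2.2 (not_le.mpr h2)

theorem aux_switch {Γ : Type*} {σ : ℝ → Γ} (h : RightLocConst σ) {a b : ℝ} (ha : 0 ≤ a)
    (hab : a ≤ b) (hne : σ a ≠ σ b) : ∃ u ∈ SwitchTimes σ, a < u ∧ u ≤ b := by
  by_contra hc
  push Not at hc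
  refine hne (aux_const h ha (b := b) ?_ b ⟨hab, le_rfl⟩).symm
  ext u
  simp only [mem_inter_iff, mem_Ioc, mem_empty_iff_false, iff_false, not_and, not_le]
  exact fun hu h2 => hc u hu h2

theorem sig_limit {m : ℕ} {τD : ℝ} (hτ : 0 < τD) {N₀ : ℕ} (σ : ℕ → ℝ → Fin m)
    (hsig : ∀ k, IsSwitchingSignal (σ k) τD N₀) (g : ℚ → Fin m) (G : ℚ → ℕ)
    (hg : ∀ q : ℚ, ∀ᶠ l in atTop, σ l q = g q)
    (hG : ∀ q : ℚ, ∀ᶠ l in atTop, cntSw (σ l) q = G q) :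
    ∃ σ' : ℝ → Fin m, IsSwitchingSignal σ' τD N₀ ∧
      (∀ t : ℝ, 0 ≤ t → ∃ r > t, ∀ q : ℚ, t < q → (q : ℝ) < r → g q = σ' t) ∧
      ∀ᵐ t ∂(volume.restrict (Set.Ici (0:ℝ))), ∀ᶠ l in atTop, σ l t = σ' t := by
  have hGm : Monotone G := by
    intro a b hab
    obtain ⟨l, h1, h2⟩ := ((hG a).and (hG b)).exists
    rw [← h1, ← h2]
    exact cntSw_mono hτ (hsig l) (by exact_mod_cast hab)
  -- constancy
  have hconst : ∀ a b : ℚ, 0 ≤ a → a ≤ b → G a = G b →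
      ∀ᶠ l in atTop, ∀ t ∈ Icc (a : ℝ) b, σ l t = σ l a := by
    intro a b ha hab he
    filter_upwards [hG a, hG b] with l h1 h2
    exact cntSw_const hτ (hsig l) (by exact_mod_cast ha) (by exact_mod_cast hab)
      (by rw [h1, h2, he])
  have hgc : ∀ a b : ℚ, 0 ≤ a → a ≤ b → G a = G b → g a = g b := by
    intro a b ha hab he
    obtain ⟨l, h1, h2, h3⟩ := ((hconst a b ha hab he).and ((hg a).and (hg b))).exists
    rw [← h2, ← h3]
    exact (h1 b ⟨by exact_mod_cast hab, le_rfl⟩).symm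
  have hkey : ∀ t : ℝ, 0 ≤ t → ∃ γ : Fin m, ∃ r > t, ∀ q : ℚ, t < q → (q : ℝ) < r → g q = γ := by
    intro t ht
    have hne : ∃ n : ℕ, ∃ q : ℚ, t < q ∧ G q = n := by
      obtain ⟨q, hq⟩ := exists_rat_gt t
      exact ⟨G q, q, hq, rfl⟩
    classical
    obtain ⟨r, hr, hGr⟩ := Nat.find_spec hne
    refine ⟨g r, r, hr, fun q h1 h2 => ?_⟩
    have hq0 : (0 : ℝ) ≤ q := by linarith
    have hqr : q ≤ r := by exact_mod_cast h2.le
    refine hgc q r (by exact_mod_cast hq0) hqr (le_antisymm (hGm hqr) ?_)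
    rw [hGr]
    exact Nat.find_min' hne ⟨q, h1, rfl⟩
  have hkey' : ∀ t : ℝ, ∃ γ : Fin m, 0 ≤ t → ∃ r > t, ∀ q : ℚ, t < q → (q : ℝ) < r → g q = γ := by
    intro t
    by_cases ht : 0 ≤ t
    · obtain ⟨γ, h⟩ := hkey t ht
      exact ⟨γ, fun _ => h⟩
    · exact ⟨g 0, fun h => absurd h ht⟩
  choose s hs using hkey'
  have hσ' : ∀ t : ℝ, 0 ≤ t → s (max t 0) = s t := fun t ht => by rw [max_eq_left ht]
  have hR0 : ∀ t : ℝ, 0 ≤ t → ∃ r > t, ∀ q : ℚ, t < q → (q : ℝ) < r → g q = s (max t 0) := by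
    intro t ht
    rw [hσ' t ht]
    exact hs t ht
  refine ⟨fun t => s (max t 0), ⟨?_, ?_⟩, hR0, ?_⟩
  · intro t
    rcases lt_or_ge t 0 with ht | ht
    · refine ⟨-t, by linarith, fun u _ h2 => ?_⟩
      simp only
      rw [max_eq_right (by linarith), max_eq_right ht.le]
    · obtain ⟨r, hr, H⟩ := hR0 t ht
      refine ⟨r - t, by linarith, fun u h1 h2 => ?_⟩
      obtain ⟨r', hr', H'⟩ := hR0 u (by linarith)
      obtain ⟨q, hq1, hq2⟩ := exists_rat_btwn (show u < min r r' from lt_min (by linarith) hr')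
      simp only
      rw [← H q (by linarith) (hq2.trans_le (min_le_left _ _)),
        ← H' q hq1 (hq2.trans_le (min_le_right _ _))]
  · intro a b ha hab
    set S := SwitchTimes (fun t => s (max t 0)) ∩ Ioo a b with hS
    by_cases hfin : S.Finite
    swap
    · have : Nat.card ↥S = 0 := by
        rw [Nat.card_coe_set_eq]; exact Set.Infinite.ncard hfin
      rw [this]
      have : 0 ≤ (b - a) / τD := div_nonneg (by linarith) hτ.le
      push_cast
      positivity
    obtain ⟨U, hU, hUd⟩ := hfin.t2_separation
    have hev : ∀ p ∈ S, ∀ᶠ l in atTop, ∃ u ∈ SwitchTimes (σ l) ∩ Ioo a b, u ∈ U p := by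
      intro p hp
      obtain ⟨⟨hp0, hpsw⟩, hpab⟩ := hp
      have hopen : IsOpen (U p ∩ Ioo a b) := (hU p).2.inter isOpen_Ioo
      obtain ⟨η, hη, hball⟩ := Metric.isOpen_iff.mp hopen p ⟨(hU p).1, hpab⟩
      rw [Real.ball_eq_Ioo] at hball
      obtain ⟨u, hu1, hu2, hu3⟩ := hpsw (min η p) (lt_min hη hp0)
      have hu0 : 0 ≤ u := by linarith [min_le_right η p]
      have huη : p - η < u := by linarith [min_le_left η p]
      obtain ⟨r, hr, H⟩ := hR0 u hu0
      obtain ⟨r', hr', H'⟩ := hR0 p hp0.le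
      obtain ⟨q, hq1, hq2⟩ := exists_rat_btwn (show u < min r p from lt_min hr hu2)
      obtain ⟨q', hq1', hq2'⟩ := exists_rat_btwn (show p < min r' (p + η) from
        lt_min hr' (by linarith))
      have e1 := H q hq1 (hq2.trans_le (min_le_left _ _))
      have e2 := H' q' hq1' (hq2'.trans_le (min_le_left _ _))
      have b1 := hq2.trans_le (min_le_right _ _)
      have b2 := hq2'.trans_le (min_le_right _ _)
      filter_upwards [hg q, hg q'] with l h1 h2
      have hne : σ l q ≠ σ l q' := by
        rw [h1, h2, e1, e2]; exact hu3
      obtain ⟨v, hv, hv1, hv2⟩ := aux_switch (hsig l).1 (by linarith) (by linarith) hne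
      have := hball (show v ∈ Ioo (p - η) (p + η) from ⟨by linarith, by linarith⟩)
      exact ⟨v, ⟨hv, this.2⟩, this.1⟩
    have hev' := (Filter.eventually_all_finite hfin).mpr hev
    obtain ⟨l, hl⟩ := hev'.exists
    choose! w hw1 hw2 using hl
    have hinj : Set.InjOn w S := by
      intro p hp p' hp' he
      by_contra hne
      have := hUd hp hp' hne
      exact Set.disjoint_left.mp this (hw2 p hp) (he ▸ hw2 p' hp')
    have hcard : S.ncard ≤ (SwitchTimes (σ l) ∩ Ioo a b).ncard :=
      Set.ncard_le_ncard_of_injOn w hw1 hinj (aux_fin hτ (hsig l) ha b)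
    have h1 := (hsig l).2 a b ha hab
    rw [Nat.card_coe_set_eq] at h1 ⊢
    exact (Nat.cast_le.mpr hcard).trans h1
  · -- almost everywhere convergence
    have hHne : ∀ t : ℝ, ∃ n : ℕ, ∃ q : ℚ, t < q ∧ G q = n := by
      intro t
      obtain ⟨q, hq⟩ := exists_rat_gt t
      exact ⟨G q, q, hq, rfl⟩
    classical
    let H : ℝ → ℕ := fun t => Nat.find (hHne t)
    have hH1 : ∀ (t : ℝ) (q : ℚ), t < q → H t ≤ G q := fun t q h => Nat.find_min' _ ⟨q, h, rfl⟩
    have hH2 : ∀ (t : ℝ) (q : ℚ), (q : ℝ) ≤ t → G q ≤ H t := by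
      intro t q h
      obtain ⟨r, hr, he⟩ := Nat.find_spec (hHne t)
      change G q ≤ Nat.find (hHne t)
      rw [← he]
      apply hGm
      exact_mod_cast h.trans hr.le
    have hHm : Monotone H := by
      intro t t' htt
      obtain ⟨r, hr, he⟩ := Nat.find_spec (hHne t')
      change H t ≤ Nat.find (hHne t')
      rw [← he]
      exact hH1 t r (htt.trans_lt hr)
    have hcount := hHm.countable_not_continuousAt
    have hae : ∀ᵐ t ∂(volume : Measure ℝ), t ∉ ({t | ¬ ContinuousAt H t} ∪ {0} : Set ℝ) :=
      (measure_eq_zero_iff_ae_notMem).mp ((hcount.union (countable_singleton 0)).measure_zero volume)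
    rw [ae_restrict_iff' measurableSet_Ici]
    filter_upwards [hae] with t ht ht0
    simp only [mem_union, mem_ofPred_eq, mem_singleton_iff, not_or, not_not] at ht
    have htpos : 0 < t := lt_of_le_of_ne ht0 (Ne.symm ht.2)
    have hnh : ∀ᶠ u in nhds t, H u = H t := by
      have := ht.1 (show {H t} ∈ nhds (H t) by simp)
      exact this
    obtain ⟨η, hη, hball⟩ := Metric.eventually_nhds_iff_ball.mp hnh
    rw [Real.ball_eq_Ioo] at hball
    obtain ⟨a, ha1, ha2⟩ := exists_between (show max 0 (t - η) < t from max_lt htpos (by linarith))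
    obtain ⟨q, hq1, hq2⟩ := exists_rat_btwn ha2
    obtain ⟨r, hr1, hr2⟩ := exists_rat_btwn (show t < t + η by linarith)
    have ha0 : 0 < a := (le_max_left _ _).trans_lt ha1
    have haη : t - η < a := (le_max_right _ _).trans_lt ha1
    have hqr : q ≤ r := by exact_mod_cast (hq2.trans hr1).le
    have hGe : G q = G r := by
      apply le_antisymm (hGm hqr)
      calc G r ≤ H r := hH2 _ _ le_rfl
        _ = H t := hball r ⟨by linarith, hr2⟩
        _ = H a := (hball a ⟨haη, by linarith⟩).symm
        _ ≤ G q := hH1 _ _ hq1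
    have hq0 : 0 ≤ q := by exact_mod_cast (ha0.trans hq1).le
    obtain ⟨r', hr', H'⟩ := hR0 t ht0
    obtain ⟨p, hp1, hp2⟩ := exists_rat_btwn (show t < min r' r from lt_min hr' hr1)
    have hpr := hp2.trans_le (min_le_right _ _)
    filter_upwards [hconst q r hq0 hqr hGe, hg p] with l h1 h2
    rw [h1 t ⟨hq2.le, hr1.le⟩, ← h1 p ⟨by linarith, hpr.le⟩, h2,
      H' p hp1 (hp2.trans_le (min_le_left _ _))]

theorem sig_measurable {m : ℕ} {σ : ℝ → Fin m} (h : RightLocConst σ) : Measurable σ := by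
  refine measurable_of_tendsto_metrizable
    (f := fun (k : ℕ) t => σ ((⌊((k : ℝ) + 1) * t⌋ + 1 : ℝ) / ((k : ℝ) + 1))) ?_ ?_
  · intro k
    have h1 : Measurable (fun t : ℝ => ⌊((k : ℝ) + 1) * t⌋) :=
      Int.measurable_floor.comp (measurable_const.mul measurable_id)
    exact (measurable_of_countable (fun z : ℤ => σ ((z + 1 : ℝ) / ((k : ℝ) + 1)))).comp h1
  · rw [tendsto_pi_nhds]
    intro t
    obtain ⟨ε, hε, H⟩ := h t
    apply tendsto_const_nhds.congr'
    obtain ⟨K, hK⟩ := exists_nat_gt (1 / ε)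
    filter_upwards [eventually_ge_atTop K] with k hk
    have hk' : (K : ℝ) ≤ k := by exact_mod_cast hk
    have hpos : (0 : ℝ) < (k : ℝ) + 1 := by positivity
    have f1 := Int.floor_le (((k : ℝ) + 1) * t)
    have f2 := Int.lt_floor_add_one (((k : ℝ) + 1) * t)
    symm
    apply H
    · rw [le_div_iff₀ hpos]; linarith
    · rw [div_lt_iff₀ hpos]
      have : 1 < ε * ((k : ℝ) + 1) := by
        rw [div_lt_iff₀ hε] at hK
        nlinarith
      linarith

theorem rhs_measurable {n m : ℕ}
    {f : EuclideanSpace ℝ (Fin n) → Fin m → EuclideanSpace ℝ (Fin n)}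
    (hf : ∀ γ : Fin m, Continuous (fun ξ => f ξ γ))
    {x : ℝ → EuclideanSpace ℝ (Fin n)} {σ : ℝ → Fin m} (hx : ContinuousOn x (Ici 0))
    (hσ : RightLocConst σ) : Measurable (fun s => f (x (max s 0)) (σ s)) := by
  have hxc : Continuous (fun s : ℝ => x (max s 0)) :=
    hx.comp_continuous (by fun_prop) (fun s => mem_Ici.mpr (le_max_right _ _))
  have h1 : Measurable (fun p : EuclideanSpace ℝ (Fin n) × Fin m => f p.1 p.2) :=
    measurable_from_prod_countable_left (fun γ => (hf γ).measurable)
  exact h1.comp (hxc.measurable.prodMk (sig_measurable hσ))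

theorem rhs_congr {n m : ℕ}
    (f : EuclideanSpace ℝ (Fin n) → Fin m → EuclideanSpace ℝ (Fin n))
    (x : ℝ → EuclideanSpace ℝ (Fin n)) (σ : ℝ → Fin m) {t : ℝ} (ht : 0 ≤ t) :
    ∫ s in (0:ℝ)..t, f (x s) (σ s) = ∫ s in (0:ℝ)..t, f (x (max s 0)) (σ s) := by
  apply intervalIntegral.integral_congr
  intro s hs
  rw [uIcc_of_le ht] at hs
  simp only
  rw [max_eq_left hs.1]

theorem traj_lip {n m : ℕ}
    {f : EuclideanSpace ℝ (Fin n) → Fin m → EuclideanSpace ℝ (Fin n)}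
    (hf : ∀ γ : Fin m, Continuous (fun ξ => f ξ γ))
    {x : ℝ → EuclideanSpace ℝ (Fin n)} {σ : ℝ → Fin m} (htr : IsTrajectory f x σ)
    (hσ : RightLocConst σ) {L : ℝ} (hL : ∀ s, ‖f (x (max s 0)) (σ s)‖ ≤ L)
    (s t : ℝ) (hs : 0 ≤ s) (ht : 0 ≤ t) : ‖x t - x s‖ ≤ L * |t - s| := by
  have hm := rhs_measurable hf htr.1 hσ
  have hi : ∀ a b : ℝ, IntervalIntegrable (fun s => f (x (max s 0)) (σ s)) volume a b := by
    intro a b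
    rw [intervalIntegrable_iff]
    exact Measure.integrableOn_of_bounded (by simp [uIoc]) hm.aestronglyMeasurable
      (Eventually.of_forall hL)
  rw [htr.2 t ht, htr.2 s hs, rhs_congr f x σ ht, rhs_congr f x σ hs, add_sub_add_left_eq_sub,
    intervalIntegral.integral_interval_sub_left (hi _ _) (hi _ _)]
  exact intervalIntegral.norm_integral_le_of_norm_le_const (fun u _ => hL u)

/-- SC property: with `χ` a closed covering of `ℝⁿ` and `f` continuous,
every uniformly bounded sequence of trajectories with average dwell-time `τD`, chatter
bound `N₀` and state constraint `x k (t) ∈ χ (σ k t)` admits a subsequence and a limit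
trajectory of the same class such that the states converge uniformly on compact subsets
of `ℝ₊` and the signals converge almost everywhere (eventual equality). -/
theorem stmt8 {n m : ℕ}
    (χ : Fin m → Set (EuclideanSpace ℝ (Fin n)))
    (hχcl : ∀ γ, IsClosed (χ γ)) (hχcov : (⋃ γ, χ γ) = Set.univ)
    (f : EuclideanSpace ℝ (Fin n) → Fin m → EuclideanSpace ℝ (Fin n))
    (hf : ∀ γ : Fin m, Continuous (fun ξ => f ξ γ))
    (τD : ℝ) (hτ : 0 < τD) (N₀ : ℕ)
    (x : ℕ → ℝ → EuclideanSpace ℝ (Fin n)) (σ : ℕ → ℝ → Fin m)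
    (htraj : ∀ k, IsTrajectory f (x k) (σ k))
    (hsig : ∀ k, IsSwitchingSignal (σ k) τD N₀)
    (hconstr : ∀ k, ∀ t : ℝ, 0 ≤ t → x k t ∈ χ (σ k t))
    (M : ℝ) (hM : ∀ k, ∀ t : ℝ, 0 ≤ t → ‖x k t‖ ≤ M) :
    ∃ φ : ℕ → ℕ, StrictMono φ ∧
      ∃ x' : ℝ → EuclideanSpace ℝ (Fin n), ∃ σ' : ℝ → Fin m,
        IsTrajectory f x' σ' ∧ IsSwitchingSignal σ' τD N₀ ∧
        (∀ t : ℝ, 0 ≤ t → x' t ∈ χ (σ' t)) ∧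
        (∀ K : Set ℝ, K ⊆ Set.Ici 0 → IsCompact K →
          TendstoUniformlyOn (fun l => x (φ l)) x' atTop K) ∧
        ∀ᵐ t ∂(volume.restrict (Set.Ici (0:ℝ))), ∀ᶠ l in atTop, σ (φ l) t = σ' t := by
  -- uniform bound on the vector field
  obtain ⟨L, hL0, hL⟩ : ∃ L : ℝ, 0 ≤ L ∧ ∀ γ ξ, ‖ξ‖ ≤ M → ‖f ξ γ‖ ≤ L := by
    have h1 : ∀ γ : Fin m, ∃ C : ℝ, ∀ ξ, ‖ξ‖ ≤ M → ‖f ξ γ‖ ≤ C := by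
      intro γ
      obtain ⟨C, hC⟩ := (isCompact_closedBall (0 : EuclideanSpace ℝ (Fin n)) M).exists_bound_of_continuousOn
        (hf γ).continuousOn
      exact ⟨C, fun ξ hξ => hC ξ (by simpa using hξ)⟩
    choose C hC using h1
    refine ⟨∑ γ, |C γ|, Finset.sum_nonneg fun _ _ => abs_nonneg _, fun γ ξ hξ => ?_⟩
    exact ((hC γ ξ hξ).trans (le_abs_self _)).trans
      (Finset.single_le_sum (f := fun γ => |C γ|) (fun _ _ => abs_nonneg _) (Finset.mem_univ γ))
  have hb : ∀ k s, ‖f (x k (max s 0)) (σ k s)‖ ≤ L :=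
    fun k s => hL _ _ (hM k _ (le_max_right _ _))
  have hlip : ∀ k (s t : ℝ), 0 ≤ s → 0 ≤ t → ‖x k t - x k s‖ ≤ L * |t - s| :=
    fun k => traj_lip hf (htraj k) (hsig k).1 (hb k)
  -- extraction
  let z : ℕ → ℚ → Fin m × ℕ × EuclideanSpace ℝ (Fin n) :=
    fun k q => (σ k q, cntSw (σ k) q, x k (max (q : ℝ) 0))
  have hcomp : IsCompact (Set.univ.pi (fun q : ℚ => (Set.univ : Set (Fin m)) ×ˢ
      (Set.Iic ⌊(N₀ : ℝ) + (|(q : ℝ)| + 1) / τD⌋₊ ×ˢ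
        Metric.closedBall (0 : EuclideanSpace ℝ (Fin n)) M))) :=
    isCompact_univ_pi fun q => isCompact_univ.prod
      (((Set.finite_Iic _).isCompact).prod (isCompact_closedBall _ _))
  obtain ⟨a, -, φ, hφ, hlim⟩ := hcomp.tendsto_subseq (x := z) (by
    intro k q _
    refine ⟨mem_univ _, cntSw_le hτ (hsig k) q, ?_⟩
    simpa using hM k _ (le_max_right _ _))
  rw [tendsto_pi_nhds] at hlim
  have hg : ∀ q : ℚ, ∀ᶠ l in atTop, σ (φ l) q = (a q).1 := by
    intro q
    have := ((continuous_fst.tendsto _).comp (hlim q)).eventually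
      (show {(a q).1} ∈ nhds (a q).1 by simp)
    exact this
  have hG : ∀ q : ℚ, ∀ᶠ l in atTop, cntSw (σ (φ l)) q = (a q).2.1 := by
    intro q
    have := (((continuous_fst.comp continuous_snd).tendsto _).comp (hlim q)).eventually
      (show {(a q).2.1} ∈ nhds (a q).2.1 by simp)
    exact this
  have hX : ∀ q : ℚ, Tendsto (fun l => x (φ l) (max (q : ℝ) 0)) atTop (nhds (a q).2.2) :=
    fun q => ((continuous_snd.comp continuous_snd).tendsto _).comp (hlim q)
  obtain ⟨σ', hσ', hright, hae⟩ := sig_limit hτ (fun l => σ (φ l)) (fun l => hsig (φ l))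
    (fun q => (a q).1) (fun q => (a q).2.1) hg hG
  have hx' : ∀ t : ℝ, ∃ y, 0 ≤ t → Tendsto (fun l => x (φ l) t) atTop (nhds y) := by
    intro t
    by_cases ht : 0 ≤ t
    swap
    · exact ⟨0, fun h => absurd h ht⟩
    have hc : CauchySeq (fun l => x (φ l) t) := by
      rw [Metric.cauchySeq_iff']
      intro ε hε
      obtain ⟨q, hq1, hq2⟩ := exists_rat_btwn (show t < t + ε / (4 * (L + 1)) by
        have : 0 < ε / (4 * (L + 1)) := by positivity
        linarith)
      have hq0 : (0 : ℝ) ≤ q := by linarith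
      have hd : L * |t - q| ≤ ε / 4 := by
        rw [abs_sub_comm, abs_of_nonneg (by linarith)]
        calc L * (q - t) ≤ (L + 1) * (ε / (4 * (L + 1))) :=
              mul_le_mul (by linarith) (by linarith) (by linarith) (by linarith)
          _ = ε / 4 := by field_simp
      have hX' := hX q
      rw [max_eq_left hq0] at hX'
      obtain ⟨N, hN⟩ := Metric.cauchySeq_iff'.mp hX'.cauchySeq (ε / 4) (by positivity)
      refine ⟨N, fun k hk => ?_⟩
      have h1 := hlip (φ k) q t hq0 ht
      have h2 := hlip (φ N) q t hq0 ht
      have h3 := hN k hk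
      rw [← dist_eq_norm] at h1 h2
      have t1 := dist_triangle (x (φ k) t) (x (φ k) q) (x (φ N) t)
      have t2 := dist_triangle (x (φ k) q) (x (φ N) q) (x (φ N) t)
      rw [dist_comm (x (φ N) q) (x (φ N) t)] at t2
      linarith
    obtain ⟨y, hy⟩ := cauchySeq_tendsto_of_complete hc
    exact ⟨y, fun _ => hy⟩
  choose x' hx' using hx'
  have hlip' : ∀ s t : ℝ, 0 ≤ s → 0 ≤ t → ‖x' t - x' s‖ ≤ L * |t - s| := fun s t hs ht =>
    le_of_tendsto ((hx' t ht).sub (hx' s hs)).norm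
      (Eventually.of_forall fun l => hlip (φ l) s t hs ht)
  have hM' : ∀ t : ℝ, 0 ≤ t → ‖x' t‖ ≤ M := fun t ht =>
    le_of_tendsto (hx' t ht).norm (Eventually.of_forall fun l => hM (φ l) t ht)
  have hcont : ContinuousOn x' (Ici 0) := by
    have : LipschitzOnWith ⟨L, hL0⟩ x' (Ici 0) := by
      apply LipschitzOnWith.of_dist_le_mul
      intro s hs t ht
      rw [dist_eq_norm, Real.dist_eq]
      exact hlip' t s ht hs
    exact this.continuousOn
  refine ⟨φ, hφ, x', σ', ⟨hcont, ?_⟩, hσ', ?_, ?_, hae⟩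
  · intro t ht
    have h1 : Tendsto (fun l => ∫ s in (0:ℝ)..t, f (x (φ l) (max s 0)) (σ (φ l) s)) atTop
        (nhds (∫ s in (0:ℝ)..t, f (x' (max s 0)) (σ' s))) := by
      apply intervalIntegral.tendsto_integral_filter_of_dominated_convergence (fun _ => L)
      · exact Eventually.of_forall fun l =>
          (rhs_measurable hf (htraj (φ l)).1 (hsig (φ l)).1).aestronglyMeasurable
      · exact Eventually.of_forall fun l => Eventually.of_forall fun s _ => hb (φ l) s
      · exact intervalIntegrable_const
      · rw [ae_restrict_iff' measurableSet_Ici] at hae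
        filter_upwards [hae] with s hs hst
        rw [uIoc_of_le ht] at hst
        have h2 := hs hst.1.le
        have h3 := ((hf (σ' s)).tendsto _).comp (hx' (max s 0) (le_max_right _ _))
        refine h3.congr' ?_
        filter_upwards [h2] with l hl
        simp only [Function.comp]
        rw [hl]
    rw [rhs_congr f x' σ' ht]
    refine tendsto_nhds_unique (hx' t ht) (((hx' 0 le_rfl).add h1).congr fun l => ?_)
    rw [(htraj (φ l)).2 t ht, rhs_congr f (x (φ l)) (σ (φ l)) ht]
  · intro t ht
    rw [← (hχcl (σ' t)).closure_eq, Metric.mem_closure_iff]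
    intro ε hε
    obtain ⟨r, hr, H⟩ := hright t ht
    obtain ⟨q, hq1, hq2⟩ := exists_rat_btwn (show t < min r (t + ε / (L + 1)) from
      lt_min hr (by
        have : 0 < ε / (L + 1) := by positivity
        linarith))
    have hq0 : (0 : ℝ) ≤ q := by linarith
    refine ⟨x' q, ?_, ?_⟩
    · refine (hχcl (σ' t)).mem_of_tendsto (hx' q hq0) ?_
      filter_upwards [hg q] with l hl
      have := hconstr (φ l) q hq0
      rwa [hl, H q hq1 (hq2.trans_le (min_le_left _ _))] at this
    · have hqt := hq2.trans_le (min_le_right _ _)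
      rw [dist_eq_norm]
      refine (hlip' q t hq0 ht).trans_lt ?_
      rw [abs_sub_comm, abs_of_nonneg (by linarith)]
      have h5 : (q : ℝ) - t < ε / (L + 1) := by linarith
      rw [lt_div_iff₀ (by linarith)] at h5
      nlinarith
  · intro K hK hKc
    rw [← tendstoLocallyUniformlyOn_iff_tendstoUniformlyOn_of_compact hKc,
      Metric.tendstoLocallyUniformlyOn_iff]
    intro ε hε t ht
    have hδ : 0 < ε / (4 * (L + 1)) := by positivity
    refine ⟨K ∩ Metric.ball t (ε / (4 * (L + 1))),
      Filter.inter_mem self_mem_nhdsWithin (mem_nhdsWithin_of_mem_nhds (Metric.ball_mem_nhds t hδ)), ?_⟩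
    filter_upwards [Metric.tendsto_nhds.mp (hx' t (hK ht)) (ε / 4) (by positivity)] with l hl
    rintro s ⟨hsK, hsb⟩
    rw [Metric.mem_ball, Real.dist_eq] at hsb
    have hd : L * |s - t| ≤ ε / 4 := by
      calc L * |s - t| ≤ (L + 1) * (ε / (4 * (L + 1))) :=
            mul_le_mul (by linarith) hsb.le (abs_nonneg _) (by linarith)
        _ = ε / 4 := by field_simp
    have h1 := hlip (φ l) t s (hK ht) (hK hsK)
    have h2 := hlip' t s (hK ht) (hK hsK)
    rw [← dist_eq_norm] at h1 h2
    have t1 := dist_triangle (x' s) (x' t) (x (φ l) s)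
    have t2 := dist_triangle (x' t) (x (φ l) t) (x (φ l) s)
    rw [dist_comm (x (φ l) t) (x (φ l) s), dist_comm (x' t) (x (φ l) t)] at t2
    linarith
end

section
/- Zero small-time distinguishability criterion: suppose V is a weak Lyapunov-like function for 𝒯′ and there exist continuous nonnegative-definite functions W_γ: ℝⁿ → ℝ with ∇_ξV(ξ,γ)·f(ξ,γ) ≤ −W_γ(ξ) for all ξ ∈ χ_γ, and such that for each γ the system ẋ = f_γ(x), y = W_γ(x) is zero small-time distinguishable (for every δ > 0, any solution with W_γ(x(t)) = 0 for all t ∈ [0,δ) satisfies x(0) = 0). Then 𝒯′ is globally asymptotically stable. -/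
open Filter Set MeasureTheory Metric

/-- A class-`𝒦_∞` function (modeled on `[0,∞)`): continuous, strictly increasing on
`[0,∞)`, vanishing at `0`, unbounded. -/
def IsKinf (α : ℝ → ℝ) : Prop :=
  Continuous α ∧ StrictMonoOn α (Set.Ici 0) ∧ α 0 = 0 ∧
    Filter.Tendsto α Filter.atTop Filter.atTop

/-- The state constraint `x(t) ∈ χ_{σ(t)}` for all `t ≥ 0` (membership in `𝒯[χ]`). -/
def InTchi {n m : ℕ} (χ : Fin m → Set (EuclideanSpace ℝ (Fin n)))
    (x : ℝ → EuclideanSpace ℝ (Fin n)) (σ : ℝ → Fin m) : Prop :=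
  ∀ t : ℝ, 0 ≤ t → x t ∈ χ (σ t)

/-- `V` is a weak Lyapunov-like function for the family `T'` of trajectories:
(1) `V` is `C¹` in the state and sandwiched between two `𝒦_∞` functions of the norm
on each `χ_γ`; (2) its derivative along the `γ`-th vector field is `≤ 0` on `χ_γ`;
(3) for every trajectory of `T'` and switching times `s < s'` of its signal (with
`s` a switching time or `0`) carrying the same index, `V` at `s'` is at most `V`
evaluated at the switching time `s''` immediately following `s` (with index `σ s`). -/
def IsWeakLyap {n m : ℕ}
    (f : EuclideanSpace ℝ (Fin n) → Fin m → EuclideanSpace ℝ (Fin n))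
    (χ : Fin m → Set (EuclideanSpace ℝ (Fin n)))
    (T' : Set ((ℝ → EuclideanSpace ℝ (Fin n)) × (ℝ → Fin m)))
    (V : EuclideanSpace ℝ (Fin n) → Fin m → ℝ) : Prop :=
  (∀ γ : Fin m, ContDiff ℝ 1 (fun ξ => V ξ γ)) ∧
  (∃ α₁ α₂ : ℝ → ℝ, IsKinf α₁ ∧ IsKinf α₂ ∧
    ∀ ξ, ∀ γ : Fin m, ξ ∈ χ γ → α₁ ‖ξ‖ ≤ V ξ γ ∧ V ξ γ ≤ α₂ ‖ξ‖) ∧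
  (∀ ξ, ∀ γ : Fin m, ξ ∈ χ γ → fderiv ℝ (fun ζ => V ζ γ) ξ (f ξ γ) ≤ 0) ∧
  (∀ p ∈ T', ∀ s s'' s' : ℝ,
    s ∈ insert (0:ℝ) (SwitchTimes p.2) → s'' ∈ SwitchTimes p.2 →
    s' ∈ SwitchTimes p.2 → s < s'' →
    (∀ u ∈ Set.Ioo s s'', u ∉ SwitchTimes p.2) →
    s < s' → p.2 s = p.2 s' →
    V (p.1 s') (p.2 s') ≤ V (p.1 s'') (p.2 s))

lemma first_time {Γ : Type*} {σ : ℝ → Γ} (hσ : RightLocConst σ) (P : Γ → Prop) {a t : ℝ}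
    (hat : a ≤ t) (hP : P (σ t)) :
    ∃ s, a ≤ s ∧ s ≤ t ∧ P (σ s) ∧ ∀ u, a ≤ u → u < s → ¬ P (σ u) := by
  set S : Set ℝ := {v | a ≤ v ∧ v ≤ t ∧ P (σ v)} with hS
  have hne : S.Nonempty := ⟨t, hat, le_rfl, hP⟩
  have hbd : BddBelow S := ⟨a, fun v hv => hv.1⟩
  have h1 : a ≤ sInf S := le_csInf hne fun v hv => hv.1
  have h2 : sInf S ≤ t := csInf_le hbd ⟨hat, le_rfl, hP⟩
  obtain ⟨ε, hε, h⟩ := hσ (sInf S)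
  obtain ⟨v, hv, hvlt⟩ := exists_lt_of_csInf_lt hne (show sInf S < sInf S + ε by linarith)
  have h3 := h v (csInf_le hbd hv) hvlt
  refine ⟨sInf S, h1, h2, h3 ▸ hv.2.2, fun u hu hus hPu => ?_⟩
  have := csInf_le hbd (show u ∈ S from ⟨hu, by linarith, hPu⟩)
  linarith

lemma mem_switch {Γ : Type*} {σ : ℝ → Γ} {a s : ℝ} (ha : 0 ≤ a) (has : a < s)
    (h : ∀ u, a ≤ u → u < s → σ u ≠ σ s) : s ∈ SwitchTimes σ := by
  refine ⟨by linarith, fun ε hε => ?_⟩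
  have h1 : max a (s - ε) < s := max_lt has (by linarith)
  refine ⟨(max a (s - ε) + s) / 2, ?_, by linarith, h _ ?_ (by linarith)⟩
  · have := le_max_right a (s - ε); linarith
  · have := le_max_left a (s - ε); linarith

lemma const_of_no_switch {Γ : Type*} {σ : ℝ → Γ} (hσ : RightLocConst σ) {a b : ℝ}
    (ha : 0 ≤ a) (h : ∀ u ∈ Set.Ioo a b, u ∉ SwitchTimes σ) :
    ∀ u ∈ Set.Ico a b, σ u = σ a := by
  intro u hu
  by_contra hne
  obtain ⟨s, h1, h2, h3, h4⟩ := first_time hσ (fun g => g ≠ σ a) hu.1 hne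
  have has : a < s := lt_of_le_of_ne h1 (by rintro rfl; exact h3 rfl)
  refine h s ⟨has, by linarith [hu.2]⟩ (mem_switch ha has fun v hv hvs => ?_)
  have := h4 v hv hvs
  push Not at this
  rw [this]; exact h3.symm

lemma switch_finite {Γ : Type*} {σ : ℝ → Γ} {τD : ℝ} {N₀ : ℕ} (hτ : 0 < τD)
    (hσ : IsSwitchingSignal σ τD N₀) (T : ℝ) : (SwitchTimes σ ∩ Set.Ioo 0 T).Finite := by
  by_contra hinf
  set A : Set ℝ := {t | 0 ≤ t ∧ ¬ (SwitchTimes σ ∩ Set.Ioo 0 t).Finite} with hA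
  have hT : 0 ≤ T := by
    by_contra h
    apply hinf
    rw [Set.Ioo_eq_empty (by linarith)]; simp
  have hne : A.Nonempty := ⟨T, hT, hinf⟩
  have hbd : BddBelow A := ⟨0, fun v hv => hv.1⟩
  set c := sInf A with hc
  have hc0 : 0 ≤ c := le_csInf hne fun v hv => hv.1
  have hfin : ∀ t, t < c → (SwitchTimes σ ∩ Set.Ioo 0 t).Finite := by
    intro t ht
    by_contra h
    by_cases h0 : 0 ≤ t
    · have := csInf_le hbd (show t ∈ A from ⟨h0, h⟩); linarith
    · apply h
      rw [Set.Ioo_eq_empty (by linarith)]; simp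
  have hcfin : (SwitchTimes σ ∩ Set.Ioo 0 c).Finite := by
    by_contra h
    obtain ⟨K, hK⟩ := exists_nat_gt ((N₀ : ℝ) + c / τD)
    obtain ⟨F, hF, hcard⟩ := Set.Infinite.exists_subset_card_eq h (K + 1)
    have hFne : F.Nonempty := by rw [← Finset.card_pos]; omega
    have hm := hF (F.max'_mem hFne)
    set M := F.max' hFne with hM
    set t := (M + c) / 2 with ht
    have htc : t < c := by have := hm.2.2; linarith
    have hMt : M < t := by have := hm.2.2; linarith
    have ht0 : 0 < t := by have := hm.2.1; linarith
    have hsub : (F : Set ℝ) ⊆ SwitchTimes σ ∩ Set.Ioo 0 t := by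
      intro v hv
      exact ⟨(hF hv).1, (hF hv).2.1, lt_of_le_of_lt (F.le_max' v hv) hMt⟩
    have h1 := hσ.2 0 t le_rfl ht0
    have h2 := Set.ncard_le_ncard hsub (hfin t htc)
    rw [Set.ncard_coe_finset, hcard] at h2
    change ((SwitchTimes σ ∩ Set.Ioo 0 t).ncard : ℝ) ≤ _ at h1
    have h3 : ((K + 1 : ℕ) : ℝ) ≤ ((SwitchTimes σ ∩ Set.Ioo 0 t).ncard : ℝ) := by exact_mod_cast h2
    push_cast at h3
    have h4 : (t - 0) / τD ≤ c / τD := by gcongr; linarith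
    linarith
  obtain ⟨ε, hε, h⟩ := hσ.1 c
  obtain ⟨v, hv, hvlt⟩ := exists_lt_of_csInf_lt hne (show sInf A < c + ε by linarith)
  apply hv.2
  refine (hcfin.union (Set.finite_singleton c)).subset ?_
  rintro u ⟨hu, hu0, huv⟩
  rcases lt_trichotomy u c with h1 | h1 | h1
  · exact Or.inl ⟨hu, hu0, h1⟩
  · exact Or.inr h1
  · exfalso
    obtain ⟨w, hw1, hw2, hw3⟩ := hu.2 (u - c) (by linarith)
    apply hw3
    rw [h w (by linarith) (by linarith), h u h1.le (by linarith)]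

lemma dwell {Γ : Type*} {σ : ℝ → Γ} {τD : ℝ} {N₀ : ℕ} (hτ : 0 < τD)
    (hσ : IsSwitchingSignal σ τD N₀) :
    ∃ δ > 0, ∀ K : ℝ, ∃ u, K ≤ u ∧ 0 ≤ u ∧ ∀ s ∈ Set.Ico u (u + δ), σ s = σ u := by
  obtain ⟨N, hN⟩ := exists_nat_gt ((N₀ : ℝ) + 1 / τD)
  have hN1 : (0:ℝ) < (N:ℝ) + 1 := by positivity
  refine ⟨1 / ((N : ℝ) + 1), by positivity, fun K => ?_⟩
  set k := max K 0 with hk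
  have hk0 : 0 ≤ k := le_max_right _ _
  set d := 1 / ((N : ℝ) + 1) with hd
  have hd0 : 0 < d := by positivity
  have hNd : ((N : ℝ) + 1) * d = 1 := by rw [hd]; field_simp
  by_contra hcon
  push Not at hcon
  have key : ∀ j : Fin (N + 1), ∃ w ∈ SwitchTimes σ, k + j * d < w ∧ w < k + j * d + d := by
    intro j
    have hj : 0 ≤ (j : ℝ) * d := by positivity
    by_contra hno
    push Not at hno
    obtain ⟨s, hs, hs'⟩ := hcon (k + j * d) (by have := le_max_left K 0; linarith) (by linarith)
    refine hs' (const_of_no_switch hσ.1 (by linarith) (fun u hu hu' => ?_) s hs)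
    have := hno u hu' hu.1
    linarith [hu.2]
  choose w hw hw1 hw2 using key
  have hinj : Function.Injective w := by
    intro i j hij
    by_contra hne
    have aux : ∀ i j : Fin (N + 1), i < j → w i < w j := by
      intro i j hlt
      have : ((i : ℕ) : ℝ) + 1 ≤ ((j : ℕ) : ℝ) := by exact_mod_cast hlt
      have h3 : (((i : ℕ) : ℝ) + 1) * d ≤ ((j : ℕ) : ℝ) * d := by gcongr
      have := hw2 i; have := hw1 j; linarith
    rcases lt_or_gt_of_ne hne with h | h
    · have := aux i j h; linarith
    · have := aux j i h; linarith
  have hfin : (SwitchTimes σ ∩ Set.Ioo k (k + 1)).Finite :=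
    (switch_finite hτ hσ (k + 1)).subset fun u hu => ⟨hu.1, by linarith [hu.2.1], hu.2.2⟩
  have hsub : Set.range w ⊆ SwitchTimes σ ∩ Set.Ioo k (k + 1) := by
    rintro _ ⟨j, rfl⟩
    have hj : 0 ≤ (j : ℝ) * d := by positivity
    have : ((j : ℕ) : ℝ) + 1 ≤ (N : ℝ) + 1 := by exact_mod_cast j.2
    have h3 : (((j : ℕ) : ℝ) + 1) * d ≤ ((N : ℝ) + 1) * d := by gcongr
    have := hw1 j; have := hw2 j
    exact ⟨hw j, by linarith, by linarith⟩
  have h2 := Set.ncard_le_ncard hsub hfin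
  have h3 : (Set.range w).ncard = N + 1 := by
    rw [← Set.image_univ, Set.ncard_image_of_injective _ hinj, Set.ncard_univ]; simp
  rw [h3] at h2
  have h1 := hσ.2 k (k + 1) hk0 (by linarith)
  change ((SwitchTimes σ ∩ Set.Ioo k (k + 1)).ncard : ℝ) ≤ _ at h1
  have h4 : ((N + 1 : ℕ) : ℝ) ≤ ((SwitchTimes σ ∩ Set.Ioo k (k + 1)).ncard : ℝ) := by exact_mod_cast h2
  push_cast at h4
  have : (k + 1 - k) / τD = 1 / τD := by congr 1; ring
  linarith

lemma locconst_at {Γ : Type*} {σ : ℝ → Γ} (hσ : RightLocConst σ) {t : ℝ} (ht : 0 < t)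
    (hn : t ∉ SwitchTimes σ) : ∀ᶠ u in nhds t, σ u = σ t := by
  obtain ⟨ε, hε, h⟩ := hσ t
  have : ∃ e > 0, ∀ u, t - e < u → u < t → σ u = σ t := by
    by_contra hc
    push Not at hc
    exact hn ⟨ht, hc⟩
  obtain ⟨e, he, h'⟩ := this
  filter_upwards [Ioo_mem_nhds (show t - e < t by linarith) (show t < t + ε by linarith)] with u hu
  rcases lt_or_ge u t with h1 | h1
  · exact h' u hu.1 h1
  · exact h u h1 hu.2

lemma rhs_integrable {n m : ℕ}
    {f : EuclideanSpace ℝ (Fin n) → Fin m → EuclideanSpace ℝ (Fin n)}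
    (hf : ∀ γ : Fin m, Continuous (fun ξ => f ξ γ))
    {x : ℝ → EuclideanSpace ℝ (Fin n)} {σ : ℝ → Fin m} (hx : ContinuousOn x (Set.Ici 0))
    {τD : ℝ} {N₀ : ℕ} (hτ : 0 < τD) (hσ : IsSwitchingSignal σ τD N₀) {t : ℝ} (ht : 0 ≤ t) :
    IntervalIntegrable (fun s => f (x s) (σ s)) volume 0 t := by
  have hfin := switch_finite hτ hσ t
  set S := SwitchTimes σ ∩ Set.Ioo 0 t with hS
  have hcont : ContinuousOn (fun s => f (x s) (σ s)) (Set.Ioo 0 t \ S) := by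
    intro s hs
    have hns : s ∉ SwitchTimes σ := fun h => hs.2 ⟨h, hs.1⟩
    have h1 : ContinuousAt x s := (hx s hs.1.1.le).continuousAt (Ici_mem_nhds hs.1.1)
    have h2 : ContinuousAt (fun u => f (x u) (σ s)) s := (hf (σ s)).continuousAt.comp h1
    refine (h2.congr ?_).continuousWithinAt
    filter_upwards [locconst_at hσ.1 hs.1.1 hns] with u hu
    rw [hu]
  have hmeas : MeasurableSet (Set.Ioo 0 t \ S) := measurableSet_Ioo.diff hfin.measurableSet
  have hae : (Set.Ioo 0 t \ S : Set ℝ) =ᵐ[volume] Set.Ioc 0 t := by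
    refine (sdiff_null_ae_eq_self ?_).trans Ioo_ae_eq_Ioc
    exact hfin.measure_zero _
  have hsm := hcont.aestronglyMeasurable (μ := volume) hmeas
  rw [Measure.restrict_congr_set hae] at hsm
  have hbound : ∃ C, ∀ s ∈ Set.Icc 0 t, ‖f (x s) (σ s)‖ ≤ C := by
    have : ∀ γ, ∃ C, ∀ s ∈ Set.Icc 0 t, ‖f (x s) γ‖ ≤ C := fun γ =>
      isCompact_Icc.exists_bound_of_continuousOn
        ((hf γ).comp_continuousOn (hx.mono fun s hs => hs.1))
    choose C hC using this
    refine ⟨∑ γ, |C γ|, fun s hs => ?_⟩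
    calc _ ≤ C (σ s) := hC _ s hs
      _ ≤ |C (σ s)| := le_abs_self _
      _ ≤ _ := Finset.single_le_sum (f := fun γ => |C γ|) (fun _ _ => abs_nonneg _) (Finset.mem_univ _)
  obtain ⟨C, hC⟩ := hbound
  rw [intervalIntegrable_iff, Set.uIoc_of_le ht]
  refine Integrable.of_bound (C := C) hsm ?_
  filter_upwards [ae_restrict_mem measurableSet_Ioc] with s hs
  exact hC s ⟨hs.1.le, hs.2⟩

lemma piece {n m : ℕ}
    {f : EuclideanSpace ℝ (Fin n) → Fin m → EuclideanSpace ℝ (Fin n)}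
    (hf : ∀ γ : Fin m, Continuous (fun ξ => f ξ γ))
    {x : ℝ → EuclideanSpace ℝ (Fin n)} {σ : ℝ → Fin m} (hx : IsTrajectory f x σ)
    {τD : ℝ} {N₀ : ℕ} (hτ : 0 < τD) (hσ : IsSwitchingSignal σ τD N₀) {a b : ℝ} {γ : Fin m}
    (ha : 0 ≤ a) (hc : ∀ u ∈ Set.Ico a b, σ u = γ) {s t : ℝ} (hs : s ∈ Set.Icc a b)
    (ht : t ∈ Set.Icc a b) : x t - x s = ∫ r in s..t, f (x r) γ := by
  have hs0 : 0 ≤ s := by linarith [hs.1]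
  have ht0 : 0 ≤ t := by linarith [ht.1]
  rw [hx.2 t ht0, hx.2 s hs0, add_sub_add_left_eq_sub, intervalIntegral.integral_interval_sub_left
    (rhs_integrable hf hx.1 hτ hσ ht0) (rhs_integrable hf hx.1 hτ hσ hs0)]
  apply intervalIntegral.integral_congr_ae
  have : ∀ᵐ r : ℝ, r ≠ b := by simp [ae_iff]
  filter_upwards [this] with r hr hrs
  have h1 := Set.uIoc_subset_uIcc hrs
  have h2 := (Set.uIcc_subset_Icc hs ht) h1
  rw [hc r ⟨h2.1, lt_of_le_of_ne h2.2 hr⟩]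

lemma piece_mono {n m : ℕ}
    {f : EuclideanSpace ℝ (Fin n) → Fin m → EuclideanSpace ℝ (Fin n)}
    (hf : ∀ γ : Fin m, Continuous (fun ξ => f ξ γ))
    {χ : Fin m → Set (EuclideanSpace ℝ (Fin n))}
    {V : EuclideanSpace ℝ (Fin n) → Fin m → ℝ}
    (hV1 : ∀ γ : Fin m, ContDiff ℝ 1 (fun ξ => V ξ γ))
    (hV3 : ∀ ξ, ∀ γ : Fin m, ξ ∈ χ γ → fderiv ℝ (fun ζ => V ζ γ) ξ (f ξ γ) ≤ 0)
    {x : ℝ → EuclideanSpace ℝ (Fin n)} {σ : ℝ → Fin m} (hx : IsTrajectory f x σ)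
    (hχ : InTchi χ x σ)
    {τD : ℝ} {N₀ : ℕ} (hτ : 0 < τD) (hσ : IsSwitchingSignal σ τD N₀) {a b : ℝ} {γ : Fin m}
    (ha : 0 ≤ a) (hab : a ≤ b) (hc : ∀ u ∈ Set.Ico a b, σ u = γ) : V (x b) γ ≤ V (x a) γ := by
  have hxc : ContinuousOn x (Set.Icc a b) := hx.1.mono fun s hs => le_trans ha hs.1
  have hd : ∀ t ∈ Set.Ioo a b, HasDerivAt x (f (x t) γ) t := by
    intro t ht
    have hg : ContinuousOn (fun r => f (x r) γ) (Set.Icc a b) := (hf γ).comp_continuousOn hxc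
    have hnh : Set.Icc a b ∈ nhds t := Icc_mem_nhds ht.1 ht.2
    have h1 : HasDerivAt (fun u => ∫ r in a..u, f (x r) γ) (f (x t) γ) t := by
      apply intervalIntegral.integral_hasDerivAt_right
      · apply ContinuousOn.intervalIntegrable
        rw [Set.uIcc_of_le ht.1.le]
        exact hg.mono (Set.Icc_subset_Icc_right ht.2.le)
      · exact (hg.mono Set.Ioo_subset_Icc_self).stronglyMeasurableAtFilter isOpen_Ioo t ht
      · exact hg.continuousAt hnh
    refine (h1.const_add (x a)).congr_of_eventuallyEq ?_
    filter_upwards [hnh] with u hu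
    rw [← piece hf hx hτ hσ ha hc ⟨le_rfl, hab⟩ hu]; simp
  have hVd : ∀ t ∈ Set.Ioo a b, HasDerivAt (fun t => V (x t) γ)
      (fderiv ℝ (fun ζ => V ζ γ) (x t) (f (x t) γ)) t := by
    intro t ht
    have h1 : HasFDerivAt (fun ζ => V ζ γ) (fderiv ℝ (fun ζ => V ζ γ) (x t)) (x t) :=
      ((hV1 γ).differentiable (by norm_num) _).hasFDerivAt
    exact h1.comp_hasDerivAt t (hd t ht)
  have hanti : AntitoneOn (fun t => V (x t) γ) (Set.Icc a b) := by
    apply antitoneOn_of_deriv_nonpos (convex_Icc a b)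
    · exact (hV1 γ).continuous.comp_continuousOn hxc
    · rw [interior_Icc]
      intro t ht
      exact (hVd t ht).differentiableAt.differentiableWithinAt
    · rw [interior_Icc]
      intro t ht
      rw [(hVd t ht).deriv]
      apply hV3
      rw [← hc t ⟨ht.1.le, ht.2⟩]
      exact hχ t (by linarith [ht.1])
  exact hanti ⟨le_rfl, hab⟩ ⟨hab, le_rfl⟩ hab

lemma return_mono {n m : ℕ}
    {f : EuclideanSpace ℝ (Fin n) → Fin m → EuclideanSpace ℝ (Fin n)}
    (hf : ∀ γ : Fin m, Continuous (fun ξ => f ξ γ))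
    {χ : Fin m → Set (EuclideanSpace ℝ (Fin n))}
    {T' : Set ((ℝ → EuclideanSpace ℝ (Fin n)) × (ℝ → Fin m))}
    {V : EuclideanSpace ℝ (Fin n) → Fin m → ℝ}
    (hV : IsWeakLyap f χ T' V)
    {p : (ℝ → EuclideanSpace ℝ (Fin n)) × (ℝ → Fin m)} (hp : p ∈ T')
    (hx : IsTrajectory f p.1 p.2) (hχ : InTchi χ p.1 p.2)
    {τD : ℝ} {N₀ : ℕ} (hτ : 0 < τD) (hσ : IsSwitchingSignal p.2 τD N₀) {s t : ℝ}
    (hs : 0 ≤ s) (hst : s ≤ t) (he : p.2 s = p.2 t) :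
    V (p.1 t) (p.2 t) ≤ V (p.1 s) (p.2 s) := by
  obtain ⟨hV1, -, hV3, hV4⟩ := hV
  have mono : ∀ {a b : ℝ} {γ : Fin m}, 0 ≤ a → a ≤ b → (∀ u ∈ Set.Ico a b, p.2 u = γ) →
    V (p.1 b) γ ≤ V (p.1 a) γ := fun ha hab hc => piece_mono hf hV1 hV3 hx hχ hτ hσ ha hab hc
  have hfin := switch_finite hτ hσ (t + 1)
  set S := SwitchTimes p.2 with hS
  by_cases hB : (S ∩ Set.Ioc s t).Nonempty
  · have hBf : (S ∩ Set.Ioc s t).Finite := hfin.subset fun u hu => ⟨hu.1, hu.1.1, by linarith [hu.2.2]⟩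
    have hAf : (insert 0 S ∩ Set.Icc 0 s).Finite := by
      refine (hfin.insert 0).subset ?_
      rintro u ⟨rfl | hu, hu'⟩
      · exact Or.inl rfl
      · exact Or.inr ⟨hu, hu.1, by linarith [hu'.2]⟩
    obtain ⟨a, ha, hamax⟩ := Set.exists_max_image _ id hAf ⟨0, Or.inl rfl, le_rfl, hs⟩
    obtain ⟨b, hb, hbmin⟩ := Set.exists_min_image _ id hBf hB
    obtain ⟨c, hc, hcmax⟩ := Set.exists_max_image _ id hBf hB
    simp only [id] at hamax hbmin hcmax
    have hnoab : ∀ u ∈ Set.Ioo a b, u ∉ S := by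
      intro u hu huS
      rcases le_or_gt u s with h | h
      · have := hamax u ⟨Or.inr huS, huS.1.le, h⟩; linarith [hu.1]
      · have := hbmin u ⟨huS, h, by linarith [hu.2, hb.2.2]⟩; linarith [hu.2]
    have hnoct : ∀ u ∈ Set.Ioo c (t + 0), u ∉ S := by
      intro u hu huS
      have := hcmax u ⟨huS, by linarith [hu.1, hc.2.1], by linarith [hu.2]⟩
      linarith [hu.1]
    have hab := const_of_no_switch hσ.1 ha.2.1 hnoab
    have has : p.2 s = p.2 a := hab s ⟨ha.2.2, hb.2.1⟩
    have hct : ∀ u ∈ Set.Icc c t, p.2 u = p.2 c := by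
      intro u hu
      by_contra hne
      obtain ⟨v, h1, h2, h3, h4⟩ := first_time hσ.1 (fun g => g ≠ p.2 c) hu.1 hne
      have hcv : c < v := lt_of_le_of_ne h1 (by rintro rfl; exact h3 rfl)
      have hvS : v ∈ S := mem_switch hc.1.1.le hcv fun w hw hwv => by
        have := h4 w hw hwv
        push Not at this
        rw [this]; exact h3.symm
      have := hcmax v ⟨hvS, by linarith [hc.2.1], by linarith [hu.2]⟩
      linarith
    have htc : p.2 t = p.2 c := hct t ⟨hc.2.2, le_rfl⟩
    have k1 : V (p.1 b) (p.2 a) ≤ V (p.1 s) (p.2 a) :=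
      mono hs hb.2.1.le fun u hu => hab u ⟨by linarith [hu.1, ha.2.2], hu.2⟩
    have k2 : V (p.1 t) (p.2 c) ≤ V (p.1 c) (p.2 c) :=
      mono hc.1.1.le hc.2.2 fun u hu => hct u ⟨hu.1, hu.2.le⟩
    have k3 : V (p.1 c) (p.2 c) ≤ V (p.1 b) (p.2 a) :=
      hV4 p hp a b c ha.1 hb.1 hc.1 (by linarith [ha.2.2, hb.2.1]) hnoab
        (by linarith [ha.2.2, hc.2.1]) (by rw [← has, ← htc, he])
    rw [has, htc]; linarith
  · rw [← he]
    refine mono hs hst (const_of_no_switch hσ.1 hs fun u hu huS => hB ⟨u, huS, hu.1, hu.2.le⟩)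

lemma IsKinf.comp {α β : ℝ → ℝ} (hα : IsKinf α) (hβ : IsKinf β) : IsKinf (α ∘ β) := by
  have hnn : ∀ r, 0 ≤ r → 0 ≤ β r := fun r hr => by
    have := hβ.2.1.monotoneOn (Set.mem_Ici.2 le_rfl) (Set.mem_Ici.2 hr) hr
    rwa [hβ.2.2.1] at this
  refine ⟨hα.1.comp hβ.1, fun a ha b hb hab => hα.2.1 (hnn a ha) (hnn b hb) (hβ.2.1 ha hb hab), ?_,
    hα.2.2.2.comp hβ.2.2.2⟩
  simp [hβ.2.2.1, hα.2.2.1]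

lemma IsKinf.nonneg {β : ℝ → ℝ} (hβ : IsKinf β) {r : ℝ} (hr : 0 ≤ r) : 0 ≤ β r := by
  have := hβ.2.1.monotoneOn (Set.mem_Ici.2 le_rfl) (Set.mem_Ici.2 hr) hr
  rwa [hβ.2.2.1] at this

lemma IsKinf.mono {β : ℝ → ℝ} (hβ : IsKinf β) {r s : ℝ} (hr : 0 ≤ r) (h : r ≤ s) : β r ≤ β s :=
  hβ.2.1.monotoneOn (Set.mem_Ici.2 hr) (Set.mem_Ici.2 (hr.trans h)) h

lemma isKinf_id : IsKinf id := ⟨continuous_id, fun _ _ _ _ h => h, rfl, tendsto_id⟩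

lemma IsKinf.iterate {β : ℝ → ℝ} (hβ : IsKinf β) (k : ℕ) : IsKinf (β^[k]) := by
  induction k with
  | zero => exact isKinf_id
  | succ k ih => rw [Function.iterate_succ']; exact hβ.comp ih

/-- existence of the gain -/
lemma exists_gain {α₁ α₂ : ℝ → ℝ} (h1 : IsKinf α₁) (h2 : IsKinf α₂) :
    ∃ β : ℝ → ℝ, IsKinf β ∧ (∀ r, 0 ≤ r → r ≤ β r) ∧
      ∀ r s, 0 ≤ r → 0 ≤ s → α₁ r ≤ α₂ s → r ≤ β s := by
  set g : ℝ → ℝ := fun r => α₁ (max r 0) + min r 0 with hg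
  have gc : Continuous g := by
    have := h1.1
    fun_prop
  have gm : StrictMono g := by
    intro a b hab
    simp only [hg]
    rcases le_or_gt 0 a with ha | ha
    · rw [max_eq_left ha, max_eq_left (by linarith), min_eq_right ha, min_eq_right (by linarith)]
      have := h1.2.1 (Set.mem_Ici.2 ha) (Set.mem_Ici.2 (by linarith)) hab
      linarith
    · have k1 : α₁ (max a 0) ≤ α₁ (max b 0) := h1.mono (le_max_right _ _) (by gcongr)
      rcases le_or_gt 0 b with hb | hb
      · rw [min_eq_left ha.le, min_eq_right hb]; linarith
      · rw [min_eq_left ha.le, min_eq_left hb.le]; linarith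
  have gtop : Tendsto g atTop atTop := by
    refine h1.2.2.2.congr' ?_
    filter_upwards [eventually_ge_atTop 0] with r hr
    simp [hg, hr]
  have gbot : Tendsto g atBot atBot := by
    refine tendsto_id.congr' ?_
    filter_upwards [eventually_le_atBot 0] with r hr
    simp [hg, hr, h1.2.2.1]
  have gs : Function.Surjective g := gc.surjective gtop gbot
  let e : ℝ ≃o ℝ := gm.orderIsoOfSurjective g gs
  have he : ∀ r, e r = g r := fun r => rfl
  have e0 : e.symm 0 = 0 := by
    rw [OrderIso.symm_apply_eq, he]; simp [hg, h1.2.2.1]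
  refine ⟨fun s => e.symm (α₂ s) + s, ⟨?_, ?_, ?_, ?_⟩, ?_, ?_⟩
  · exact (e.symm.continuous.comp h2.1).add continuous_id
  · intro a ha b hb hab
    have := e.symm.strictMono (h2.2.1 ha hb hab)
    simp only; linarith
  · simp [h2.2.2.1, e0]
  · exact (e.symm.tendsto_atTop.comp h2.2.2.2).atTop_add_atTop tendsto_id
  · intro r hr
    have := e.symm.monotone (h2.nonneg hr)
    rw [e0] at this
    linarith
  · intro r s hr hs h
    have : r ≤ e.symm (α₂ s) := by
      rw [OrderIso.le_symm_apply, he]; simpa [hg, hr] using h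
    linarith

lemma stab_one {n m : ℕ}
    {f : EuclideanSpace ℝ (Fin n) → Fin m → EuclideanSpace ℝ (Fin n)}
    (hf : ∀ γ : Fin m, Continuous (fun ξ => f ξ γ))
    {χ : Fin m → Set (EuclideanSpace ℝ (Fin n))}
    {T' : Set ((ℝ → EuclideanSpace ℝ (Fin n)) × (ℝ → Fin m))}
    {V : EuclideanSpace ℝ (Fin n) → Fin m → ℝ}
    (hV : IsWeakLyap f χ T' V) {α₁ α₂ β : ℝ → ℝ}
    (hα : ∀ ξ, ∀ γ : Fin m, ξ ∈ χ γ → α₁ ‖ξ‖ ≤ V ξ γ ∧ V ξ γ ≤ α₂ ‖ξ‖)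
    (hβ : IsKinf β) (hβid : ∀ r, 0 ≤ r → r ≤ β r)
    (hβα : ∀ r s, 0 ≤ r → 0 ≤ s → α₁ r ≤ α₂ s → r ≤ β s)
    {p : (ℝ → EuclideanSpace ℝ (Fin n)) × (ℝ → Fin m)} (hp : p ∈ T')
    (hx : IsTrajectory f p.1 p.2) (hχ : InTchi χ p.1 p.2)
    {τD : ℝ} {N₀ : ℕ} (hτ : 0 < τD) (hσ : IsSwitchingSignal p.2 τD N₀) {t₀ : ℝ} (ht₀ : 0 ≤ t₀)
    (k : ℕ) : ∀ t, t₀ ≤ t → (p.2 '' Set.Icc t₀ t).ncard ≤ k → ‖p.1 t‖ ≤ β^[k] ‖p.1 t₀‖ := by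
  have ret : ∀ s t, 0 ≤ s → s ≤ t → p.2 s = p.2 t → ‖p.1 t‖ ≤ β ‖p.1 s‖ := by
    intro s t hs hst he
    apply hβα _ _ (norm_nonneg _) (norm_nonneg _)
    calc _ ≤ V (p.1 t) (p.2 t) := (hα _ _ (hχ t (hs.trans hst))).1
      _ ≤ V (p.1 s) (p.2 s) := return_mono hf hV hp hx hχ hτ hσ hs hst he
      _ ≤ _ := (hα _ _ (hχ s hs)).2
  induction k with
  | zero =>
    intro t ht hc
    exfalso
    have h0 : (p.2 '' Set.Icc t₀ t).ncard = 0 := by omega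
    rw [Set.ncard_eq_zero (Set.toFinite _)] at h0
    have : p.2 t₀ ∈ p.2 '' Set.Icc t₀ t := ⟨t₀, ⟨le_rfl, ht⟩, rfl⟩
    rw [h0] at this; exact this
  | succ k ih =>
    intro t ht hc
    rw [Function.iterate_succ_apply']
    obtain ⟨s, h1, h2, h3, h4⟩ := first_time hσ.1 (fun g => g = p.2 t) ht rfl
    refine (ret s t (ht₀.trans h1) h2 h3).trans (hβ.mono (norm_nonneg _) ?_)
    rcases eq_or_lt_of_le h1 with rfl | hlt
    · have : ∀ j, ∀ r, 0 ≤ r → r ≤ β^[j] r := by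
        intro j
        induction j with
        | zero => intro r _; exact le_rfl
        | succ j ihj =>
          intro r hr
          rw [Function.iterate_succ_apply']
          exact (ihj r hr).trans (hβid _ ((hβ.iterate j).nonneg hr))
      exact this k _ (norm_nonneg _)
    · have hle : ∀ u ∈ Set.Ioo t₀ s, ‖p.1 u‖ ≤ β^[k] ‖p.1 t₀‖ := by
        intro u hu
        apply ih u hu.1.le
        have hss : p.2 '' Set.Icc t₀ u ⊂ p.2 '' Set.Icc t₀ t := by
          rw [Set.ssubset_iff_of_subset (Set.image_mono (Set.Icc_subset_Icc_right (by linarith [hu.2])))]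
          refine ⟨p.2 t, ⟨t, ⟨ht, le_rfl⟩, rfl⟩, ?_⟩
          rintro ⟨v, hv, hve⟩
          exact h4 v hv.1 (by linarith [hv.2, hu.2]) hve
        have := Set.ncard_lt_ncard hss (Set.toFinite _)
        omega
      have hcs : ContinuousAt p.1 s := (hx.1 s (ht₀.trans h1)).continuousAt (Ici_mem_nhds (by linarith))
      have hten : Tendsto (fun u => ‖p.1 u‖) (nhdsWithin s (Set.Iio s)) (nhds ‖p.1 s‖) :=
        (hcs.norm.tendsto).mono_left nhdsWithin_le_nhds
      refine le_of_tendsto hten ?_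
      filter_upwards [Ioo_mem_nhdsLT hlt] with u hu using hle u hu

lemma attract {n m : ℕ}
    {f : EuclideanSpace ℝ (Fin n) → Fin m → EuclideanSpace ℝ (Fin n)}
    (hf : ∀ γ : Fin m, Continuous (fun ξ => f ξ γ))
    {χ : Fin m → Set (EuclideanSpace ℝ (Fin n))}
    (hχcl : ∀ γ, IsClosed (χ γ))
    {T' : Set ((ℝ → EuclideanSpace ℝ (Fin n)) × (ℝ → Fin m))}
    {V : EuclideanSpace ℝ (Fin n) → Fin m → ℝ}
    (hV : IsWeakLyap f χ T' V)
    (W : Fin m → EuclideanSpace ℝ (Fin n) → ℝ)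
    (hWnn : ∀ γ ξ, 0 ≤ W γ ξ)
    (hder : ∀ ξ, ∀ γ : Fin m, ξ ∈ χ γ →
      fderiv ℝ (fun ζ => V ζ γ) ξ (f ξ γ) ≤ -(W γ ξ))
    (hdist : ∀ γ : Fin m, ∀ δ : ℝ, 0 < δ →
      ∀ y : ℝ → EuclideanSpace ℝ (Fin n),
        (∀ t ∈ Set.Ico (0:ℝ) δ, HasDerivAt y (f (y t) γ) t) →
        (∀ t ∈ Set.Ico (0:ℝ) δ, W γ (y t) = 0) → y 0 = 0)
    {p : (ℝ → EuclideanSpace ℝ (Fin n)) × (ℝ → Fin m)} (hp : p ∈ T')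
    (hx : IsTrajectory f p.1 p.2) (hχ : InTchi χ p.1 p.2)
    {τD : ℝ} {N₀ : ℕ} (hτ : 0 < τD) (hσ : IsSwitchingSignal p.2 τD N₀)
    {R c : ℝ} (hR : ∀ t, 0 ≤ t → ‖p.1 t‖ ≤ R) (hc : 0 < c) (hlow : ∀ t, 0 ≤ t → c ≤ ‖p.1 t‖) :
    False := by
  obtain ⟨δ, hδ, hdw⟩ := dwell hτ hσ
  set G : Set ℝ := {u | 0 ≤ u ∧ ∀ s ∈ Set.Ico u (u + δ), p.2 s = p.2 u} with hG
  have hfreq : ∃ᶠ u in atTop, u ∈ G := by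
    rw [frequently_atTop]
    intro K
    obtain ⟨u, h1, h2, h3⟩ := hdw K
    exact ⟨u, h1, h2, h3⟩
  have hNe : NeBot (atTop ⊓ 𝓟 G) := frequently_mem_iff_neBot.1 hfreq
  set U : Ultrafilter ℝ := Ultrafilter.of (atTop ⊓ 𝓟 G) with hU
  have hUle : (U : Filter ℝ) ≤ atTop ⊓ 𝓟 G := Ultrafilter.of_le _
  have hUtop : (U : Filter ℝ) ≤ atTop := hUle.trans inf_le_left
  have hUG : ∀ᶠ u in (U : Filter ℝ), u ∈ G := hUle (mem_inf_of_right (mem_principal_self G))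
  -- the mode
  obtain ⟨γ, hγ⟩ : ∃ γ, ∀ᶠ u in (U : Filter ℝ), p.2 u = γ := by
    by_contra hcon
    push Not at hcon
    have : ∀ γ, ∀ᶠ u in (U : Filter ℝ), p.2 u ≠ γ := fun γ => by
      have := hcon γ
      exact this
    have h2 := (eventually_all (l := (U : Filter ℝ))).2 this
    obtain ⟨u, hu⟩ := h2.exists
    exact hu _ rfl
  have hgood : ∀ᶠ u in (U : Filter ℝ), 0 ≤ u ∧ ∀ s ∈ Set.Ico u (u + δ), p.2 s = γ := by
    filter_upwards [hUG, hγ] with u hu hu'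
    exact ⟨hu.1, fun s hs => (hu.2 s hs).trans hu'⟩
  -- the limit curve
  have hlim : ∀ t : ℝ, ∃ y, 0 ≤ t → Tendsto (fun u => p.1 (u + t)) U (nhds y) := by
    intro t
    by_cases ht : 0 ≤ t
    · have hK : IsCompact (Metric.closedBall (0 : EuclideanSpace ℝ (Fin n)) R) :=
        isCompact_closedBall _ _
      have hm : ((U.map fun u => p.1 (u + t) : Ultrafilter _) : Filter _) ≤
          𝓟 (Metric.closedBall (0 : EuclideanSpace ℝ (Fin n)) R) := by
        rw [le_principal_iff]
        change ∀ᶠ u in (U : Filter ℝ), p.1 (u + t) ∈ _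
        filter_upwards [hUG] with u hu
        rw [mem_closedBall_zero_iff]
        exact hR _ (add_nonneg hu.1 ht)
      obtain ⟨y, -, hy⟩ := hK.ultrafilter_le_nhds _ hm
      exact ⟨y, fun _ => hy⟩
    · exact ⟨0, fun h => absurd h ht⟩
  choose y hy using hlim
  have hyR : ∀ t, 0 ≤ t → ‖y t‖ ≤ R := fun t ht =>
    le_of_tendsto (hy t ht).norm (by filter_upwards [hUG] with u hu using hR _ (add_nonneg hu.1 ht))
  have hyc : ∀ t, 0 ≤ t → c ≤ ‖y t‖ := fun t ht =>
    ge_of_tendsto (hy t ht).norm (by filter_upwards [hUG] with u hu using hlow _ (add_nonneg hu.1 ht))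
  have hyχ : ∀ t ∈ Set.Ico 0 δ, y t ∈ χ γ := by
    intro t ht
    refine (hχcl γ).mem_of_tendsto (hy t ht.1) ?_
    filter_upwards [hgood] with u hu
    rw [← hu.2 (u + t) ⟨by linarith [ht.1], by linarith [ht.2]⟩]
    exact hχ _ (by linarith [hu.1, ht.1])
  have hVc : Continuous (fun ξ => V ξ γ) := (hV.1 γ).continuous
  have hVy : ∀ t, 0 ≤ t → Tendsto (fun u => V (p.1 (u + t)) γ) U (nhds (V (y t) γ)) :=
    fun t ht => (hVc.tendsto _).comp (hy t ht)
  have hret : ∀ s t, 0 ≤ s → s ≤ t → p.2 s = γ → p.2 t = γ → V (p.1 t) γ ≤ V (p.1 s) γ := by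
    intro s t hs hst h1 h2
    have := return_mono hf hV hp hx hχ hτ hσ hs hst (h1.trans h2.symm)
    rwa [h1, h2] at this
  have hVconst : ∀ t ∈ Set.Ico 0 δ, V (y t) γ = V (y 0) γ := by
    intro t ht
    apply le_antisymm
    · refine le_of_tendsto_of_tendsto (hVy t ht.1) (hVy 0 le_rfl) ?_
      filter_upwards [hgood] with u hu
      rw [add_zero]
      exact hret u (u + t) hu.1 (by linarith [ht.1]) (hu.2 u ⟨le_rfl, by linarith⟩)
        (hu.2 (u + t) ⟨by linarith [ht.1], by linarith [ht.2]⟩)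
    · refine ge_of_tendsto (hVy t ht.1) ?_
      filter_upwards [hgood] with u₀ hu₀
      refine le_of_tendsto (hVy 0 le_rfl) ?_
      filter_upwards [hgood, hUtop (eventually_ge_atTop (u₀ + t))] with u hu hge
      rw [add_zero]
      exact hret (u₀ + t) u (by linarith [hu₀.1, ht.1]) hge
        (hu₀.2 (u₀ + t) ⟨by linarith [ht.1], by linarith [ht.2]⟩) (hu.2 u ⟨le_rfl, by linarith⟩)
  -- derivative
  have hK : IsCompact (Metric.closedBall (0 : EuclideanSpace ℝ (Fin n)) R) := isCompact_closedBall _ _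
  obtain ⟨M, hM⟩ := hK.exists_bound_of_continuousOn (hf γ).continuousOn
  have hUC := hK.uniformContinuousOn_of_continuous (hf γ).continuousOn
  rw [Metric.uniformContinuousOn_iff] at hUC
  have hM0 : 0 ≤ M := (norm_nonneg _).trans (hM (p.1 0) (by
    rw [mem_closedBall_zero_iff]; exact hR 0 le_rfl))
  have hest : ∀ ε > 0, ∃ η > 0, ∀ t ∈ Set.Ico 0 δ, ∀ t' ∈ Set.Ico 0 δ, |t' - t| < η →
      ‖y t' - y t - (t' - t) • f (y t) γ‖ ≤ ε * |t' - t| := by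
    intro ε hε
    obtain ⟨η, hη, hu⟩ := hUC ε hε
    refine ⟨η / (M + 1), by positivity, fun t ht t' ht' htt => ?_⟩
    have hten : Tendsto (fun u => ‖p.1 (u + t') - p.1 (u + t) - (t' - t) • f (p.1 (u + t)) γ‖) U
        (nhds ‖y t' - y t - (t' - t) • f (y t) γ‖) :=
      (((hy t' ht'.1).sub (hy t ht.1)).sub
        ((((hf γ).tendsto _).comp (hy t ht.1)).const_smul (t' - t))).norm
    refine le_of_tendsto hten ?_
    filter_upwards [hgood] with u hgu
    have hpc : ∀ s ∈ Set.Icc u (u + δ), ∀ s' ∈ Set.Icc u (u + δ),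
        p.1 s' - p.1 s = ∫ r in s..s', f (p.1 r) γ := fun s hs s' hs' =>
      piece hf hx hτ hσ hgu.1 hgu.2 hs hs'
    have hball : ∀ s, u ≤ s → p.1 s ∈ Metric.closedBall (0 : EuclideanSpace ℝ (Fin n)) R := by
      intro s hs
      rw [mem_closedBall_zero_iff]; exact hR s (hgu.1.trans hs)
    have hmt : u + t ∈ Set.Icc u (u + δ) := ⟨by linarith [ht.1], by linarith [ht.2]⟩
    have hmt' : u + t' ∈ Set.Icc u (u + δ) := ⟨by linarith [ht'.1], by linarith [ht'.2]⟩
    have hlip : ∀ s ∈ Set.Icc u (u + δ), ‖p.1 s - p.1 (u + t)‖ ≤ M * |s - (u + t)| := by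
      intro s hs
      rw [hpc _ hmt s hs]
      apply intervalIntegral.norm_integral_le_of_norm_le_const
      intro r hr
      exact hM _ (hball r ((Set.uIcc_subset_Icc hmt hs) (Set.uIoc_subset_uIcc hr)).1)
    have hcont : ContinuousOn (fun r => f (p.1 r) γ) (Set.uIcc (u + t) (u + t')) :=
      (hf γ).comp_continuousOn (hx.1.mono fun r hr =>
        hgu.1.trans ((Set.uIcc_subset_Icc hmt hmt') hr).1)
    have heq : p.1 (u + t') - p.1 (u + t) - (t' - t) • f (p.1 (u + t)) γ =
        ∫ r in (u + t)..(u + t'), (f (p.1 r) γ - f (p.1 (u + t)) γ) := by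
      rw [intervalIntegral.integral_sub hcont.intervalIntegrable (by simp),
        hpc _ hmt _ hmt', intervalIntegral.integral_const]
      congr 2; ring
    rw [heq, show t' - t = (u + t') - (u + t) by ring]
    apply intervalIntegral.norm_integral_le_of_norm_le_const
    intro r hr
    have hr1 := Set.uIoc_subset_uIcc hr
    have hr2 := (Set.uIcc_subset_Icc hmt hmt') hr1
    rw [← dist_eq_norm]
    refine (hu _ (hball r hr2.1) _ (hball _ hmt.1) ?_).le
    rw [dist_eq_norm]
    have h5 : |r - (u + t)| ≤ |t' - t| := by
      have := Set.abs_sub_left_of_mem_uIcc hr1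
      rwa [show u + t' - (u + t) = t' - t by ring] at this
    calc _ ≤ M * |r - (u + t)| := hlip r hr2
      _ ≤ M * |t' - t| := by gcongr
      _ ≤ (M + 1) * |t' - t| := by gcongr; linarith
      _ < (M + 1) * (η / (M + 1)) := by gcongr
      _ = η := by field_simp
  set Y : ℝ → EuclideanSpace ℝ (Fin n) := fun t => if t < 0 then y 0 + t • f (y 0) γ else y t with hYdef
  have hYy : ∀ t, 0 ≤ t → Y t = y t := fun t ht => by simp [hYdef, not_lt.2 ht]
  have hYd : ∀ t ∈ Set.Ico 0 δ, HasDerivAt Y (f (Y t) γ) t := by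
    intro t ht
    rw [hasDerivAt_iff_isLittleO, Asymptotics.isLittleO_iff]
    intro ε hε
    obtain ⟨η, hη, he⟩ := hest ε hε
    rw [hYy t ht.1]
    have hn1 : ∀ᶠ t' in nhds t, t' < δ := Iio_mem_nhds ht.2
    have hn2 : ∀ᶠ t' in nhds t, |t' - t| < η := by
      filter_upwards [Metric.ball_mem_nhds t hη] with t' h
      rwa [Metric.mem_ball, Real.dist_eq] at h
    have hn3 : ∀ᶠ t' in nhds t, 0 < t → 0 < t' := by
      by_cases h : 0 < t
      · filter_upwards [Ioi_mem_nhds h] with t' h' _ using h'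
      · exact Eventually.of_forall fun _ h' => absurd h' h
    filter_upwards [hn1, hn2, hn3] with t' h1 h2 h3
    rw [Real.norm_eq_abs]
    rcases le_or_gt 0 t' with h4 | h4
    · rw [hYy t' h4]
      exact he t ht t' ⟨h4, h1⟩ h2
    · have : t = 0 := by
        by_contra hne
        have := h3 (lt_of_le_of_ne ht.1 (Ne.symm hne))
        linarith
      subst this
      have : Y t' = y 0 + t' • f (y 0) γ := by simp [hYdef, h4]
      rw [this]
      simp
      positivity
  have hW0 : ∀ t ∈ Set.Ico 0 δ, W γ (Y t) = 0 := by
    intro t ht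
    have h1 : HasFDerivAt (fun ζ => V ζ γ) (fderiv ℝ (fun ζ => V ζ γ) (Y t)) (Y t) :=
      ((hV.1 γ).differentiable (by norm_num) _).hasFDerivAt
    have h2 : HasDerivWithinAt (fun s => V (Y s) γ) (fderiv ℝ (fun ζ => V ζ γ) (Y t) (f (Y t) γ))
        (Set.Ico 0 δ) t := (h1.comp_hasDerivAt t (hYd t ht)).hasDerivWithinAt
    have h3 : HasDerivWithinAt (fun s => V (Y s) γ) 0 (Set.Ico 0 δ) t := by
      refine (hasDerivWithinAt_const t (Set.Ico 0 δ) (V (y 0) γ)).congr ?_ ?_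
      · intro s hs
        rw [hYy s hs.1, hVconst s hs]
      · rw [hYy t ht.1, hVconst t ht]
    have h4 := (uniqueDiffOn_Ico (0:ℝ) δ t ht).eq_deriv _ h2 h3
    have h5 := hder (Y t) γ (by rw [hYy t ht.1]; exact hyχ t ht)
    have h6 := hWnn γ (Y t)
    linarith
  have h0 := hdist γ δ hδ Y hYd hW0
  rw [hYy 0 le_rfl] at h0
  have := hyc 0 le_rfl
  rw [h0, norm_zero] at this
  linarith

/-- zero small-time distinguishability criterion: suppose `V` is a weak
Lyapunov-like function for `T'` (members of `T'` being trajectories in `𝒯[χ] ∩ 𝒯_a`,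
with `f(0,γ) = 0` for `γ ∈ Γ* = {γ : 0 ∈ χ_γ}`), and there are continuous nonnegative
functions `W_γ` with `∇_ξV(ξ,γ)·f(ξ,γ) ≤ -W_γ(ξ)` on `χ_γ` such that each system
`ẋ = f_γ(x), y = W_γ(x)` is zero small-time distinguishable. Then `T'` is globally
asymptotically stable: uniformly stable, and every state trajectory converges to `0`. -/
theorem stmt17 {n m : ℕ}
    (f : EuclideanSpace ℝ (Fin n) → Fin m → EuclideanSpace ℝ (Fin n))
    (hf : ∀ γ : Fin m, Continuous (fun ξ => f ξ γ))
    (χ : Fin m → Set (EuclideanSpace ℝ (Fin n)))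
    (hχcl : ∀ γ, IsClosed (χ γ)) (hχcov : (⋃ γ, χ γ) = Set.univ)
    (hf0 : ∀ γ : Fin m, (0 : EuclideanSpace ℝ (Fin n)) ∈ χ γ → f 0 γ = 0)
    (T' : Set ((ℝ → EuclideanSpace ℝ (Fin n)) × (ℝ → Fin m)))
    (hT' : ∀ p ∈ T', IsTrajectory f p.1 p.2 ∧ InTchi χ p.1 p.2 ∧
      ∃ τD : ℝ, 0 < τD ∧ ∃ N₀ : ℕ, IsSwitchingSignal p.2 τD N₀)
    (V : EuclideanSpace ℝ (Fin n) → Fin m → ℝ)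
    (hV : IsWeakLyap f χ T' V)
    (W : Fin m → EuclideanSpace ℝ (Fin n) → ℝ)
    (hWcont : ∀ γ, Continuous (W γ)) (hWnn : ∀ γ ξ, 0 ≤ W γ ξ)
    (hder : ∀ ξ, ∀ γ : Fin m, ξ ∈ χ γ →
      fderiv ℝ (fun ζ => V ζ γ) ξ (f ξ γ) ≤ -(W γ ξ))
    (hdist : ∀ γ : Fin m, ∀ δ : ℝ, 0 < δ →
      ∀ y : ℝ → EuclideanSpace ℝ (Fin n),
        (∀ t ∈ Set.Ico (0:ℝ) δ, HasDerivAt y (f (y t) γ) t) →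
        (∀ t ∈ Set.Ico (0:ℝ) δ, W γ (y t) = 0) → y 0 = 0) :
    (∃ α : ℝ → ℝ, IsKinf α ∧
      ∀ p ∈ T', ∀ t₀ t : ℝ, 0 ≤ t₀ → t₀ ≤ t → ‖p.1 t‖ ≤ α ‖p.1 t₀‖) ∧
    ∀ p ∈ T', Tendsto p.1 atTop (nhds 0) := by
  obtain ⟨α₁, α₂, h1, h2, hα⟩ := hV.2.1
  obtain ⟨β, hβ, hβid, hβα⟩ := exists_gain h1 h2
  have hst : ∀ p ∈ T', ∀ t₀ t : ℝ, 0 ≤ t₀ → t₀ ≤ t → ‖p.1 t‖ ≤ β^[m] ‖p.1 t₀‖ := by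
    intro p hp t₀ t ht₀ ht
    obtain ⟨hx, hχ, τD, hτ, N₀, hσ⟩ := hT' p hp
    refine stab_one hf hV hα hβ hβid hβα hp hx hχ hτ hσ ht₀ m t ht ?_
    have := Set.ncard_le_card (p.2 '' Set.Icc t₀ t)
    simpa using this
  have hk := hβ.iterate m
  refine ⟨⟨β^[m], hk, hst⟩, fun p hp => ?_⟩
  obtain ⟨hx, hχ, τD, hτ, N₀, hσ⟩ := hT' p hp
  have hsmall : ∀ c > 0, ∃ t, 0 ≤ t ∧ ‖p.1 t‖ < c := by
    intro c hc
    by_contra hcon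
    push Not at hcon
    exact attract hf hχcl hV W hWnn hder hdist hp hx hχ hτ hσ
      (fun t ht => hst p hp 0 t le_rfl ht) hc hcon
  rw [Metric.tendsto_atTop]
  intro ε hε
  have hc0 : Tendsto (β^[m]) (nhds 0) (nhds 0) := by
    have := hk.1.tendsto 0
    rwa [hk.2.2.1] at this
  obtain ⟨c, hc, hcb⟩ := Metric.tendsto_nhds_nhds.1 hc0 ε hε
  obtain ⟨t₀, ht₀, hlt⟩ := hsmall c hc
  refine ⟨t₀, fun t ht => ?_⟩
  rw [dist_zero_right]
  refine (hst p hp t₀ t ht₀ ht).trans_lt ?_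
  have := hcb (x := ‖p.1 t₀‖) (by simpa using hlt)
  rw [Real.dist_eq, sub_zero] at this
  exact (le_abs_self _).trans_lt this
end
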